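/- Under the standing assumptions, let x₀ ∈ X, let A, B > 0 with B ≥ 4λ²A, let k ≥ 2 be the largest integer with B ≥ 2^k λ² A, and set U₁ = B̄_d(x₀, λA) and U₂ = X ∖ B_d(x₀, B/λ). Then the conformal modulus in (X,q) of the family of paths joining U₁ and U₂ in X satisfies mod(U₁,U₂;X) ≤ 2π C_W² C_S² C_D⁶ / k, where C_S = 16 C_W C_D^{28+16⌈log₂ λ⌉} and the modulus is computed with respect to q-length of paths and the Hausdorff 2-measure H²_q of (X,q). -/

import Mathlib

open Metric MeasureTheory Set Filter Topology UniformSpace ENNReal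
open scoped NNReal

noncomputable section

/-- The set `B_{xy} = B(x, d(x,y)) ∪ B(y, d(x,y))`. -/
def pairBall {X : Type*} [MetricSpace X] (x y : X) : Set X :=
  Metric.ball x (dist x y) ∪ Metric.ball y (dist x y)

/-- A `δ`-chain from `x` to `y`: a finite sequence `z 0 = x, …, z m = y` with
consecutive distances at most `δ`. -/
def IsDeltaChain {X : Type*} [MetricSpace X] (δ : ℝ) (x y : X) (z : ℕ → X) (m : ℕ) : Prop :=
  z 0 = x ∧ z m = y ∧ ∀ j < m, dist (z j) (z (j + 1)) ≤ δ

/-- `q^δ_{μ,s}(x,y)`: infimum of `∑ μ(B_{x_j x_{j-1}})^{1/s}` over `δ`-chains from `x` to `y`. -/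
def qDelta {X : Type*} [MetricSpace X] [MeasurableSpace X]
    (μ : Measure X) (s δ : ℝ) (x y : X) : ℝ≥0∞ :=
  ⨅ (m : ℕ) (z : ℕ → X) (_ : IsDeltaChain δ x y z m),
    ∑ j ∈ Finset.range m, μ (pairBall (z j) (z (j + 1))) ^ (1 / s)

/-- `q_{μ,s}(x,y) = limsup_{δ → 0⁺} q^δ_{μ,s}(x,y)`. -/
def qmu {X : Type*} [MetricSpace X] [MeasurableSpace X]
    (μ : Measure X) (s : ℝ) (x y : X) : ℝ≥0∞ :=
  Filter.limsup (fun δ => qDelta μ s δ x y) (nhdsWithin (0 : ℝ) (Set.Ioi 0))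

/-- `μ` is a doubling measure with constant `CD`: balls have positive finite measure and
`μ(B(x,2r)) ≤ CD · μ(B(x,r))`. -/
def IsDoublingWith {X : Type*} [MetricSpace X] [MeasurableSpace X]
    (μ : Measure X) (CD : ℝ≥0) : Prop :=
  (∀ (x : X) (r : ℝ), 0 < r → 0 < μ (Metric.ball x r) ∧ μ (Metric.ball x r) < ⊤) ∧
    ∀ (x : X) (r : ℝ), 0 < r → μ (Metric.ball x (2 * r)) ≤ CD * μ (Metric.ball x r)

/-- `μ` is a `CW`-weak metric doubling measure of dimension `s`:
`μ(B_{xy})^{1/s} ≤ CW · q_{μ,s}(x,y)` for all `x, y`. -/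
def IsWMDM {X : Type*} [MetricSpace X] [MeasurableSpace X]
    (μ : Measure X) (s : ℝ) (CW : ℝ≥0) : Prop :=
  ∀ x y : X, μ (pairBall x y) ^ (1 / s) ≤ CW * qmu μ s x y

/-- A continuum is a compact connected set. -/
def IsContinuum {X : Type*} [TopologicalSpace X] (K : Set X) : Prop :=
  IsCompact K ∧ IsConnected K

/-- `X` is `λ`-linearly locally connected. -/
def IsLLC (X : Type*) [MetricSpace X] (lam : ℝ) : Prop :=
  ∀ (x : X) (r : ℝ), 0 < r →
    (∀ y ∈ Metric.ball x r, ∀ z ∈ Metric.ball x r,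
      ∃ K : Set X, IsContinuum K ∧ K ⊆ Metric.ball x (lam * r) ∧ y ∈ K ∧ z ∈ K) ∧
    (∀ y z : X, y ∉ Metric.ball x r → z ∉ Metric.ball x r →
      ∃ K : Set X, IsContinuum K ∧ K ⊆ (Metric.ball x (r / lam))ᶜ ∧ y ∈ K ∧ z ∈ K)

/-- The sphere `S²`, with the metric inherited from `ℝ³`. -/
abbrev Sphere2 : Set (EuclideanSpace ℝ (Fin 3)) := Metric.sphere 0 1

/-- A circle domain in `S²`: an open connected set each of whose complementary
connected components is a point or a round closed disk (a closed metric ball). -/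
def IsCircleDomainS2 (Ω : Set ↥Sphere2) : Prop :=
  IsOpen Ω ∧ IsConnected Ω ∧ ∀ p ∈ Ωᶜ,
    connectedComponentIn Ωᶜ p = {p} ∨
      ∃ (c : ↥Sphere2) (ρ : ℝ), 0 < ρ ∧ connectedComponentIn Ωᶜ p = Metric.closedBall c ρ

/-- A circle domain in the plane. -/
def IsCircleDomainC (Ω : Set ℂ) : Prop :=
  IsOpen Ω ∧ IsConnected Ω ∧ ∀ p ∈ Ωᶜ,
    connectedComponentIn Ωᶜ p = {p} ∨
      ∃ (c : ℂ) (ρ : ℝ), 0 < ρ ∧ connectedComponentIn Ωᶜ p = Metric.closedBall c ρ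

/-- The residual set `X̄ ∖ X` inside the completion of `X`. -/
def resid (X : Type*) [MetricSpace X] : Set (Completion X) :=
  (Set.range ((↑) : X → Completion X))ᶜ

/-- The collection of connected components of `X̄ ∖ X`. -/
def residComps (X : Type*) [MetricSpace X] : Set (Set (Completion X)) :=
  {C | ∃ p ∈ resid X, C = connectedComponentIn (resid X) p}

/-- Distance between two sets. -/
def setSetDist {Z : Type*} [MetricSpace Z] (A B : Set Z) : ℝ :=
  sInf (Set.image2 dist A B)

/-- `f` is `η`-quasisymmetric, for a homeomorphism `η` of `[0,∞)`. -/
def IsQSWith {X Y : Type*} [MetricSpace X] [MetricSpace Y]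
    (η : ℝ≥0 ≃ₜ ℝ≥0) (f : X → Y) : Prop :=
  ∀ x y z : X, x ≠ z →
    nndist (f x) (f y) ≤ η (nndist x y / nndist x z) * nndist (f x) (f z)

/-- `ℓ = ⌈log₂ λ⌉`. -/
def ellOf (lam : ℝ) : ℕ := (Int.ceil (Real.logb 2 lam)).toNat

/-- The constant `C_S = 16 C_W C_D^{28+16⌈log₂ λ⌉}`. -/
def CSconst (lam : ℝ) (CD CW : ℝ≥0) : ℝ≥0∞ :=
  16 * (CW : ℝ≥0∞) * (CD : ℝ≥0∞) ^ (28 + 16 * ellOf lam)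

/-- `K` separates `A` and `B`: `A` and `B` lie in different components of the complement of `K`. -/
def SeparatesSets {X : Type*} [TopologicalSpace X] (K A B : Set X) : Prop :=
  A ⊆ Kᶜ ∧ B ⊆ Kᶜ ∧
    ∀ p ∈ A, ∀ p' ∈ B, connectedComponentIn Kᶜ p ≠ connectedComponentIn Kᶜ p'

/-- A topological disk: a set homeomorphic to an open disk in the plane. -/
def IsTopDisk {X : Type*} [TopologicalSpace X] (U : Set X) : Prop :=
  Nonempty (↥U ≃ₜ ↥(Metric.ball (0 : ℂ) 1))

/-- Lower line integral `∫_γ ρ ds` over `γ : [a,b] → Y`, as a supremum of lower sums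
over partitions of `[a,b]`. -/
def lowerLineIntegral {Y : Type*} [PseudoEMetricSpace Y]
    (ρ : Y → ℝ≥0∞) (γ : ℝ → Y) (a b : ℝ) : ℝ≥0∞ :=
  ⨆ (n : ℕ) (t : ℕ → ℝ) (_ : t 0 = a) (_ : t n = b) (_ : ∀ j < n, t j ≤ t (j + 1)),
    ∑ j ∈ Finset.range n,
      (⨅ u ∈ Set.Icc (t j) (t (j + 1)), ρ (γ u)) * edist (γ (t j)) (γ (t (j + 1)))

/-- `γ` (with parameter interval `[0,1]`) is locally rectifiable on the open interval `(0,1)`. -/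
def LocRectifiableOn {Y : Type*} [PseudoEMetricSpace Y] (γ : ℝ → Y) : Prop :=
  ∀ c d : ℝ, 0 < c → c ≤ d → d < 1 → eVariationOn γ (Set.Icc c d) < ⊤

/-- The line integral of `ρ` over the open part of `γ`. -/
def openLineIntegral {Y : Type*} [PseudoEMetricSpace Y] (ρ : Y → ℝ≥0∞) (γ : ℝ → Y) : ℝ≥0∞ :=
  ⨆ (c : ℝ) (d : ℝ) (_ : 0 < c) (_ : c ≤ d) (_ : d < 1), lowerLineIntegral ρ γ c d

/-- `ρ` is admissible for the path family `Γ`. -/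
def IsAdmissible {Y : Type*} [PseudoEMetricSpace Y] (Γ : Set (ℝ → Y)) (ρ : Y → ℝ≥0∞) : Prop :=
  ∀ γ ∈ Γ, LocRectifiableOn γ → 1 ≤ openLineIntegral ρ γ

def borelSpaceBorel (Y : Type*) [TopologicalSpace Y] : @BorelSpace Y _ (borel Y) :=
  @BorelSpace.mk Y _ (borel Y) rfl

/-- The Hausdorff 2-measure of a metric space, normalized to coincide with Lebesgue measure
in the Euclidean plane. -/
def hausdorff2 (Y : Type*) [EMetricSpace Y] : @Measure Y (borel Y) :=
  ENNReal.ofReal (Real.pi / 4) •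
    @Measure.hausdorffMeasure Y _ (borel Y) (borelSpaceBorel Y) 2

/-- The conformal modulus of a path family in a metric space, with respect to the
(normalized) Hausdorff 2-measure. -/
def modulusH2 {Y : Type*} [EMetricSpace Y] (Γ : Set (ℝ → Y)) : ℝ≥0∞ :=
  ⨅ (ρ : Y → ℝ≥0∞) (_ : @Measurable Y ℝ≥0∞ (borel Y) _ ρ) (_ : IsAdmissible Γ ρ),
    @MeasureTheory.lintegral Y (borel Y) (hausdorff2 Y) fun y => ρ y ^ 2

/-- The conformal modulus of a path family in the plane, with respect to Lebesgue area measure. -/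
def modulusC (Γ : Set (ℝ → ℂ)) : ℝ≥0∞ :=
  ⨅ (ρ : ℂ → ℝ≥0∞) (_ : Measurable ρ) (_ : IsAdmissible Γ ρ), ∫⁻ z, ρ z ^ 2

/-- A homeomorphism between metric spaces is `K`-quasiconformal if it distorts moduli of
path families by a factor of at most `K` in both directions. -/
def IsQCWith {Y Z : Type*} [EMetricSpace Y] [EMetricSpace Z] (K : ℝ≥0∞) (f : Y ≃ₜ Z) : Prop :=
  ∀ Γ : Set (ℝ → Y),
    modulusH2 ((fun γ => (f : Y → Z) ∘ γ) '' Γ) ≤ K * modulusH2 Γ ∧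
      modulusH2 Γ ≤ K * modulusH2 ((fun γ => (f : Y → Z) ∘ γ) '' Γ)

/-- The family `Γ(A,B;G)` of paths joining `A` and `B` in `G` (parameter interval `[0,1]`). -/
def joinPaths (A B G : Set ℂ) : Set (ℝ → ℂ) :=
  {γ | ContinuousOn γ (Set.Icc 0 1) ∧ γ 0 ∈ A ∧ γ 1 ∈ B ∧
    γ 0 ∈ closure G ∧ γ 1 ∈ closure G ∧ ∀ u ∈ Set.Ioo (0 : ℝ) 1, γ u ∈ G}

/-- The constant `α = 2^{−2−2M−π²C_W²C_D^{1+log₂ C_X}/(8 log 2)}`. -/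
def alphaConst (M : ℕ) (CD CW : ℝ≥0) (CX : ℝ) : ℝ :=
  (2 : ℝ) ^ (-2 - 2 * (M : ℝ) -
    Real.pi ^ 2 * (CW : ℝ) ^ 2 * (CD : ℝ) ^ ((1 : ℝ) + Real.logb 2 CX) / (8 * Real.log 2))


def TSep {Z : Type*} [TopologicalSpace Z] (K : Set Z) (x y : Z) : Prop :=
  ∃ U V : Set Z, IsOpen U ∧ IsOpen V ∧ Disjoint U V ∧ U ∪ V = Kᶜ ∧ x ∈ U ∧ y ∈ V

lemma sep_of_lift {Z : Type*} [TopologicalSpace Z] {K : Set Z} (hK : IsClosed K) {x y : Z}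
    (g : Z → ℝ) (hg : ContinuousOn g Kᶜ) (hz : ∀ z ∈ Kᶜ, ∃ n : ℤ, g z = n * (2 * Real.pi))
    (hx : x ∈ Kᶜ) (hy : y ∈ Kᶜ) (hxy : g x ≠ g y) : TSep K x y := by
  have hg' : ContinuousOn (fun z => |g z - g x|) Kᶜ := (hg.sub continuousOn_const).abs
  have key : ∀ z ∈ Kᶜ, g z = g x ∨ Real.pi < |g z - g x| := by
    intro z hzK
    obtain ⟨n, hn⟩ := hz z hzK
    obtain ⟨m, hm⟩ := hz x hx
    by_cases h : n = m
    · left; rw [hn, hm, h]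
    · right
      have h1 : (1 : ℝ) ≤ |((n - m : ℤ) : ℝ)| := by
        rw [← Int.cast_abs]; exact_mod_cast Int.one_le_abs (sub_ne_zero.2 h)
      have : g z - g x = ((n - m : ℤ) : ℝ) * (2 * Real.pi) := by rw [hn, hm]; push_cast; ring
      rw [this, abs_mul, abs_of_pos Real.two_pi_pos]
      nlinarith [Real.pi_pos]
  refine ⟨Kᶜ ∩ (fun z => |g z - g x|) ⁻¹' (Iio Real.pi), Kᶜ ∩ (fun z => |g z - g x|) ⁻¹' (Ioi Real.pi),
    hg'.isOpen_inter_preimage hK.isOpen_compl isOpen_Iio,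
    hg'.isOpen_inter_preimage hK.isOpen_compl isOpen_Ioi, ?_, ?_, ?_, ?_⟩
  · rw [Set.disjoint_left]
    rintro z ⟨_, h1⟩ ⟨_, h2⟩
    have h1' : |g z - g x| < Real.pi := h1
    have h2' : Real.pi < |g z - g x| := h2
    exact lt_asymm h1' h2'
  · ext z
    constructor
    · rintro (h | h) <;> exact h.1
    · intro h
      rcases key z h with h' | h'
      · left; refine ⟨h, ?_⟩; simp [h', Real.pi_pos]
      · right; exact ⟨h, h'⟩
  · exact ⟨hx, by simp [Real.pi_pos]⟩
  · refine ⟨hy, ?_⟩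
    rcases key y hy with h' | h'
    · exact absurd h'.symm hxy
    · exact h'

lemma sep_union {Z : Type*} [TopologicalSpace Z] [NormalSpace Z]
    (hlift : ∀ f : Z → Circle, Continuous f → ∃ θ : Z → ℝ, Continuous θ ∧ ∀ z, Circle.exp (θ z) = f z)
    {K₁ K₂ : Set Z} (h1 : IsClosed K₁) (h2 : IsClosed K₂) (hd : Disjoint K₁ K₂) {x y : Z}
    (hs : TSep (K₁ ∪ K₂) x y) : TSep K₁ x y ∨ TSep K₂ x y := by
  classical
  obtain ⟨U, V, hU, hV, hUV, hc, hx, hy⟩ := hs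
  obtain ⟨u, hu1, hu2, hu3⟩ := exists_continuous_zero_one_of_isClosed h1 h2 hd
  have hfr : ∀ z ∈ frontier V, z ∈ K₁ ∪ K₂ := by
    intro z hz
    by_contra hn
    have : z ∈ U ∪ V := by rw [hc]; exact hn
    rw [hV.frontier_eq] at hz
    rcases this with h | h
    · exact (hUV.closure_right hU).ne_of_mem h hz.1 rfl
    · exact hz.2 h
  have hxV : x ∉ V := fun h => hUV.ne_of_mem hx h rfl
  have hxc : x ∈ (K₁ ∪ K₂)ᶜ := hc ▸ Or.inl hx
  have hyc : y ∈ (K₁ ∪ K₂)ᶜ := hc ▸ Or.inr hy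
  let f : Z → Circle := fun z => if z ∈ V then Circle.exp (-(Real.pi * u z)) else Circle.exp (Real.pi * u z)
  have hf : Continuous f := by
    refine Continuous.if ?_ (by fun_prop) (by fun_prop)
    intro z hz
    rcases hfr z hz with h | h
    · rw [hu1 h]; simp
    · rw [hu2 h]
      rw [Circle.exp_eq_exp]
      exact ⟨-1, by simp; ring⟩
  obtain ⟨θ, hθ, hθf⟩ := hlift f hf
  let w1 : Z → ℝ := fun z => if z ∈ V then 2 * Real.pi - Real.pi * u z else Real.pi * u z
  let w2 : Z → ℝ := fun z => if z ∈ V then - (Real.pi * u z) else Real.pi * u z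
  have hw1 : ContinuousOn w1 K₁ᶜ := by
    refine ContinuousOn.if ?_ (Continuous.continuousOn (by fun_prop)) (Continuous.continuousOn (by fun_prop))
    intro z hz
    rcases hfr z hz.2 with h | h
    · exact absurd h hz.1
    · rw [hu2 h]; simp; ring
  have hw2 : ContinuousOn w2 K₂ᶜ := by
    refine ContinuousOn.if ?_ (Continuous.continuousOn (by fun_prop)) (Continuous.continuousOn (by fun_prop))
    intro z hz
    rcases hfr z hz.2 with h | h
    · rw [hu1 h]; simp
    · exact absurd h hz.1
  have e1 : ∀ z, ∃ n : ℤ, θ z - w1 z = n * (2 * Real.pi) := by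
    intro z
    have : Circle.exp (θ z) = Circle.exp (w1 z) := by
      rw [hθf]; simp only [f, w1]
      split_ifs
      · rw [Circle.exp_eq_exp]; exact ⟨-1, by push_cast; ring⟩
      · rfl
    obtain ⟨m, hm⟩ := Circle.exp_eq_exp.1 this
    exact ⟨m, by rw [hm]; ring⟩
  have e2 : ∀ z, ∃ n : ℤ, θ z - w2 z = n * (2 * Real.pi) := by
    intro z
    have : Circle.exp (θ z) = Circle.exp (w2 z) := by
      rw [hθf]; simp only [f, w2]
      split_ifs <;> rfl
    obtain ⟨m, hm⟩ := Circle.exp_eq_exp.1 this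
    exact ⟨m, by rw [hm]; ring⟩
  by_cases hA : θ x - w1 x = θ y - w1 y
  · right
    refine sep_of_lift h2 (fun z => θ z - w2 z) (hθ.continuousOn.sub hw2) (fun z _ => e2 z)
      (fun h => hxc (Or.inr h)) (fun h => hyc (Or.inr h)) ?_
    intro hB
    simp only [w1, w2, if_neg hxV, if_pos hy] at hA hB
    have := Real.pi_pos
    linarith
  · left
    exact sep_of_lift h1 (fun z => θ z - w1 z) (hθ.continuousOn.sub hw1) (fun z _ => e1 z)
      (fun h => hxc (Or.inl h)) (fun h => hyc (Or.inl h)) hA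

abbrev Pl := EuclideanSpace ℝ (Fin 2)

lemma plane_lift (f : Pl → Circle) (hf : Continuous f) :
    ∃ θ : Pl → ℝ, Continuous θ ∧ ∀ z, Circle.exp (θ z) = f z := by
  obtain ⟨e₀, he⟩ : ∃ e₀ : ℝ, Circle.exp e₀ = f 0 := ⟨_, Circle.exp_arg (f 0)⟩
  obtain ⟨F, hF, _⟩ := Circle.isCoveringMap_exp.existsUnique_continuousMap_lifts (⟨f, hf⟩ : C(Pl, Circle)) 0 e₀ he
  exact ⟨F, F.continuous, fun z => congrFun hF.2 z⟩

/-- minimal separating subfamily -/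
lemma sep_min {Z ι : Type*} [TopologicalSpace Z] (C : ι → Set Z) (I : Finset ι) {x y : Z}
    (hs : TSep (⋃ i ∈ I, C i) x y) : ∃ J ⊆ I, TSep (⋃ i ∈ J, C i) x y ∧
      ∀ J' ⊂ J, ¬ TSep (⋃ i ∈ J', C i) x y := by
  classical
  induction I using Finset.strongInduction with
  | H I ih =>
    by_cases h : ∃ J' ⊂ I, TSep (⋃ i ∈ J', C i) x y
    · obtain ⟨J', hJ, hs'⟩ := h
      obtain ⟨J, a, b, c⟩ := ih J' hJ hs'
      exact ⟨J, a.trans hJ.1, b, c⟩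
    · push Not at h
      exact ⟨I, subset_rfl, hs, h⟩

lemma TSep.symm {Z : Type*} [TopologicalSpace Z] {K : Set Z} {x y : Z} (h : TSep K x y) : TSep K y x := by
  obtain ⟨U, V, hU, hV, hUV, hc, hx, hy⟩ := h
  exact ⟨V, U, hV, hU, hUV.symm, by rw [union_comm, hc], hy, hx⟩

lemma TSep.meets {Z : Type*} [TopologicalSpace Z] {K L : Set Z} {x y : Z} (h : TSep K x y)
    (hL : IsPreconnected L) (hx : x ∈ L) (hy : y ∈ L) : (L ∩ K).Nonempty := by
  obtain ⟨U, V, hU, hV, hUV, hc, hxU, hyV⟩ := h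
  by_contra hn
  rw [Set.not_nonempty_iff_eq_empty] at hn
  have hLs : L ⊆ U ∪ V := by
    rw [hc]; intro z hz hzK
    have : z ∈ L ∩ K := ⟨hz, hzK⟩
    rw [hn] at this; exact this
  obtain ⟨z, _, h1, h2⟩ := hL U V hU hV hLs ⟨x, hx, hxU⟩ ⟨y, hy, hyV⟩
  exact hUV.ne_of_mem h1 h2 rfl

lemma plane_compl_conn (ρ : ℝ) (hρ : 0 < ρ) : IsPreconnected ((closedBall (0 : Pl) ρ)ᶜ) := by
  have hS : IsPreconnected (sphere (0 : Pl) 1) := by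
    apply isPreconnected_sphere
    rw [← Module.finrank_eq_rank]; simp
  have h := (isPreconnected_Ioi (a := ρ)).prod hS
  have h2 := h.image (fun p : ℝ × Pl => p.1 • p.2) (by fun_prop)
  convert h2 using 1
  ext z
  simp only [mem_compl_iff, mem_closedBall, dist_zero_right, not_le, mem_image, mem_prod, mem_Ioi,
    mem_sphere, Prod.exists]
  constructor
  · intro hz
    have : ‖z‖ ≠ 0 := by linarith
    refine ⟨‖z‖, ‖z‖⁻¹ • z, ⟨hz, ?_⟩, ?_⟩
    · rw [norm_smul]; simp [this]
    · rw [smul_smul, mul_inv_cancel₀ this, one_smul]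
  · rintro ⟨a, b, ⟨ha, hb⟩, rfl⟩
    rw [norm_smul, hb, Real.norm_eq_abs, abs_of_pos (hρ.trans ha), mul_one]; exact ha

lemma sep_global {X : Type*} [MetricSpace X] (j : Pl → X) (hj : IsOpenEmbedding j) {K : Set X}
    (hK : IsCompact K) (hKj : K ⊆ range j) {x y : Pl} (hs : TSep (j ⁻¹' K) x y) :
    TSep K (j x) (j y) := by
  have hKc : IsCompact (j ⁻¹' K) := hj.isInducing.isCompact_preimage' hK hKj
  obtain ⟨ρ, hρ, hb⟩ : ∃ ρ : ℝ, 0 < ρ ∧ j ⁻¹' K ⊆ closedBall 0 ρ := by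
    obtain ⟨ρ, h⟩ := hKc.isBounded.subset_closedBall (0 : Pl)
    exact ⟨max ρ 1, by positivity, h.trans (closedBall_subset_closedBall (le_max_left _ _))⟩
  have main : ∀ {x y : Pl} {U V : Set Pl}, IsOpen U → IsOpen V → Disjoint U V → U ∪ V = (j ⁻¹' K)ᶜ →
      x ∈ U → y ∈ V → (closedBall (0 : Pl) ρ)ᶜ ⊆ V → TSep K (j x) (j y) := by
    intro x y U V hU hV hUV hc hx hy hsub
    have hcl : IsCompact (Vᶜ) := by
      refine (isCompact_closedBall (0 : Pl) ρ).of_isClosed_subset hV.isClosed_compl ?_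
      intro z hz; by_contra hn; exact hz (hsub hn)
    refine ⟨j '' U, (j '' Vᶜ)ᶜ, hj.isOpenMap U hU, (hcl.image hj.continuous).isClosed.isOpen_compl, ?_, ?_,
      ⟨x, hx, rfl⟩, ?_⟩
    · rw [Set.disjoint_left]
      rintro _ ⟨z, hz, rfl⟩ h
      exact h ⟨z, fun hz' => hUV.ne_of_mem hz hz' rfl, rfl⟩
    · ext p
      constructor
      · rintro (⟨z, hz, rfl⟩ | h)
        · have : z ∈ U ∪ V := Or.inl hz
          rw [hc] at this; exact this
        · intro hp
          obtain ⟨z, rfl⟩ := hKj hp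
          refine h ⟨z, fun hz => ?_, rfl⟩
          have : z ∈ U ∪ V := Or.inr hz
          rw [hc] at this; exact this hp
      · intro hp
        by_cases h : p ∈ j '' Vᶜ
        · obtain ⟨z, hz, rfl⟩ := h
          have : z ∈ U ∪ V := by rw [hc]; exact hp
          exact Or.inl ⟨z, this.resolve_right hz, rfl⟩
        · exact Or.inr h
    · rintro ⟨z, hz, hzy⟩
      rw [hj.injective hzy] at hz; exact hz hy
  obtain ⟨U, V, hU, hV, hUV, hc, hx, hy⟩ := hs
  have hsub : (closedBall (0 : Pl) ρ)ᶜ ⊆ U ∪ V := by rw [hc]; exact compl_subset_compl.2 hb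
  rcases (plane_compl_conn ρ hρ).subset_or_subset hU hV hUV hsub with h | h
  · exact (main hV hU hUV.symm (by rw [union_comm, hc]) hy hx h).symm
  · exact main hU hV hUV hc hx hy h

def gg {X : Type*} [MetricSpace X] [MeasurableSpace X] (μ : Measure X) (x : X) (r : ℝ) : ℝ :=
  Real.sqrt (μ.real (Metric.ball x r))

section basics
variable {X : Type*} [MetricSpace X] [MeasurableSpace X] {μ : Measure X} {CD CW : ℝ≥0}

lemma IsDoublingWith.fin (hd : IsDoublingWith μ CD) (x : X) (r : ℝ) : μ (Metric.ball x r) ≠ ⊤ := by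
  by_cases h : 0 < r
  · exact (hd.1 x r h).2.ne
  · rw [ball_eq_empty.2 (not_lt.1 h)]; simp

lemma gg_nonneg (x : X) (r : ℝ) : 0 ≤ gg μ x r := Real.sqrt_nonneg _

lemma gg_mono (hd : IsDoublingWith μ CD) {x y : X} {r s : ℝ} (h : Metric.ball x r ⊆ Metric.ball y s) :
    gg μ x r ≤ gg μ y s :=
  Real.sqrt_le_sqrt (measureReal_mono h (hd.fin y s))

lemma gg_pos (hd : IsDoublingWith μ CD) (x : X) {r : ℝ} (hr : 0 < r) : 0 < gg μ x r :=
  Real.sqrt_pos.2 (ENNReal.toReal_pos (hd.1 x r hr).1.ne' (hd.fin x r))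

lemma gg_sq (x : X) (r : ℝ) : gg μ x r ^ 2 = μ.real (Metric.ball x r) :=
  Real.sq_sqrt measureReal_nonneg

lemma real_double (hd : IsDoublingWith μ CD) (x : X) {r : ℝ} (hr : 0 < r) :
    μ.real (Metric.ball x (2 * r)) ≤ CD * μ.real (Metric.ball x r) := by
  have := hd.2 x r hr
  have h2 := ENNReal.toReal_mono (ENNReal.mul_ne_top ENNReal.coe_ne_top (hd.fin x r)) this
  rwa [ENNReal.toReal_mul] at h2

lemma gg_double (hd : IsDoublingWith μ CD) (x : X) {r : ℝ} (hr : 0 < r) :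
    gg μ x (2 * r) ≤ Real.sqrt CD * gg μ x r := by
  unfold gg
  rw [← Real.sqrt_mul (by positivity)]
  exact Real.sqrt_le_sqrt (real_double hd x hr)

lemma gg_pow (hd : IsDoublingWith μ CD) (x : X) {r : ℝ} (hr : 0 < r) (n : ℕ) :
    gg μ x (2 ^ n * r) ≤ Real.sqrt CD ^ n * gg μ x r := by
  induction n with
  | zero => simp
  | succ n ih =>
    rw [pow_succ', mul_assoc, pow_succ', mul_assoc]
    exact (gg_double hd x (by positivity)).trans (by gcongr)

lemma real_pow (hd : IsDoublingWith μ CD) (x : X) {r : ℝ} (hr : 0 < r) (n : ℕ) :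
    μ.real (Metric.ball x (2 ^ n * r)) ≤ (CD : ℝ) ^ n * μ.real (Metric.ball x r) := by
  induction n with
  | zero => simp
  | succ n ih =>
    rw [pow_succ', mul_assoc, pow_succ', mul_assoc]
    exact (real_double hd x (by positivity)).trans (by gcongr)

lemma one_le_CD (hd : IsDoublingWith μ CD) (x : X) : (1 : ℝ) ≤ CD := by
  have h := real_double hd x one_pos
  have h2 : μ.real (Metric.ball x 1) ≤ μ.real (Metric.ball x (2 * 1)) :=
    measureReal_mono (ball_subset_ball (by norm_num)) (hd.fin _ _)
  have h3 : 0 < μ.real (Metric.ball x 1) := ENNReal.toReal_pos (hd.1 x 1 one_pos).1.ne' (hd.fin x 1)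
  by_contra hn
  push Not at hn
  nlinarith

lemma one_le_kap (hd : IsDoublingWith μ CD) (x : X) : 1 ≤ Real.sqrt CD :=
  Real.one_le_sqrt.2 (one_le_CD hd x)

lemma ofReal_gg (hd : IsDoublingWith μ CD) (x : X) (r : ℝ) :
    μ (Metric.ball x r) ^ (1 / 2 : ℝ) = ENNReal.ofReal (gg μ x r) := by
  unfold gg
  rw [Real.sqrt_eq_rpow, ← ENNReal.ofReal_rpow_of_nonneg measureReal_nonneg (by norm_num),
    ofReal_measureReal (hd.fin x r)]

lemma pairBall_comm (x y : X) : pairBall x y = pairBall y x := by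
  unfold pairBall; rw [dist_comm, union_comm]

lemma pairBall_subset {x y : X} {ρ : ℝ} (h : dist x y ≤ ρ) : pairBall x y ⊆ Metric.ball x (2 * ρ) := by
  rintro z (hz | hz)
  · rw [mem_ball] at *; have := dist_nonneg (x := x) (y := y); linarith
  · rw [mem_ball] at *
    have := dist_triangle z y x
    rw [dist_comm y x] at this; linarith

lemma pair_le (hd : IsDoublingWith μ CD) {x y : X} {ρ : ℝ} (h : dist x y ≤ ρ) :
    μ (pairBall x y) ^ (1 / 2 : ℝ) ≤ ENNReal.ofReal (gg μ x (2 * ρ)) := by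
  rw [← ofReal_gg hd]
  exact ENNReal.rpow_le_rpow (measure_mono (pairBall_subset h)) (by norm_num)

lemma le_pair (hd : IsDoublingWith μ CD) (x y : X) :
    ENNReal.ofReal (gg μ x (dist x y)) ≤ μ (pairBall x y) ^ (1 / 2 : ℝ) := by
  rw [← ofReal_gg hd]
  exact ENNReal.rpow_le_rpow (measure_mono subset_union_left) (by norm_num)

lemma qDelta_self (s δ : ℝ) (x : X) : qDelta μ s δ x x = 0 := by
  apply le_antisymm _ zero_le
  refine iInf_le_of_le 0 (iInf_le_of_le (fun _ => x) (iInf_le_of_le ⟨rfl, rfl, by simp⟩ ?_))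
  simp

lemma qDelta_anti (s : ℝ) {δ δ' : ℝ} (h : δ ≤ δ') (x y : X) : qDelta μ s δ' x y ≤ qDelta μ s δ x y := by
  refine le_iInf fun m => le_iInf fun z => le_iInf fun hz => ?_
  exact iInf_le_of_le m (iInf_le_of_le z (iInf_le_of_le ⟨hz.1, hz.2.1, fun j hj => (hz.2.2 j hj).trans h⟩ le_rfl))

lemma qDelta_cons (s : ℝ) {δ : ℝ} {x y : X} (h : dist x y ≤ δ) (z : X) :
    qDelta μ s δ x z ≤ μ (pairBall x y) ^ (1 / s) + qDelta μ s δ y z := by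
  conv_rhs => rw [qDelta]
  simp only [ENNReal.add_iInf]
  refine le_iInf fun m => le_iInf fun c => le_iInf fun hc => ?_
  refine iInf_le_of_le (m + 1) (iInf_le_of_le (fun i => Nat.casesOn i x c) (iInf_le_of_le ⟨rfl, hc.2.1, ?_⟩ ?_))
  · intro j hj
    cases j with
    | zero => simpa [hc.1] using h
    | succ j => exact hc.2.2 j (by omega)
  · rw [Finset.sum_range_succ', add_comm]
    simp [hc.1]

lemma qDelta_snoc (s : ℝ) {δ : ℝ} {y z : X} (h : dist y z ≤ δ) (x : X) :
    qDelta μ s δ x z ≤ qDelta μ s δ x y + μ (pairBall y z) ^ (1 / s) := by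
  conv_rhs => rw [qDelta]
  simp only [ENNReal.iInf_add]
  refine le_iInf fun m => le_iInf fun c => le_iInf fun hc => ?_
  refine iInf_le_of_le (m + 1) (iInf_le_of_le (fun i => if i ≤ m then c i else z)
    (iInf_le_of_le ⟨by simp [hc.1], by simp, ?_⟩ ?_))
  · intro j hj
    rcases Nat.lt_succ_iff_lt_or_eq.1 hj with hj | rfl
    · simpa [hj.le, Nat.succ_le_of_lt hj] using hc.2.2 j hj
    · simpa [hc.2.1] using h
  · rw [Finset.sum_range_succ]
    refine add_le_add (Finset.sum_le_sum fun j hj => ?_) ?_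
    · rw [Finset.mem_range] at hj
      simp [hj.le, Nat.succ_le_of_lt hj]
    · simp [hc.2.1]

lemma qmu_le {s : ℝ} {x y : X} {c : ℝ≥0∞} (h : ∀ δ > 0, qDelta μ s δ x y ≤ c) : qmu μ s x y ≤ c := by
  unfold qmu
  refine limsup_le_of_le (by isBoundedDefault) ?_
  filter_upwards [self_mem_nhdsWithin] with δ hδ using h δ hδ

lemma gg_small [BorelSpace X] (hd : IsDoublingWith μ CD) (x : X) (hx : (𝓝[≠] x).NeBot) {ε : ℝ} (hε : 0 < ε) :
    ∃ r > 0, gg μ x r < ε := by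
  have hlim : Tendsto (fun n : ℕ => μ (Metric.ball x (1 / ((n : ℝ) + 1)) \ {x})) atTop (𝓝 0) := by
    have h0 : (⋂ n : ℕ, Metric.ball x (1 / ((n : ℝ) + 1)) \ {x}) = ∅ := by
      rw [Set.eq_empty_iff_forall_notMem]
      intro z hz
      rw [mem_iInter] at hz
      have hzx : 0 < dist z x := dist_pos.2 (hz 0).2
      obtain ⟨n, hn⟩ := exists_nat_one_div_lt hzx
      have := (hz n).1
      rw [mem_ball] at this; linarith
    have := tendsto_measure_iInter_atTop (μ := μ) (s := fun n : ℕ => Metric.ball x (1 / ((n : ℝ) + 1)) \ {x})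
      (fun n => (measurableSet_ball.diff (measurableSet_singleton x)).nullMeasurableSet)
      (fun m n hmn => sdiff_subset_sdiff_left (ball_subset_ball (by gcongr)))
      ⟨0, (lt_of_le_of_lt (measure_mono sdiff_subset) (hd.fin x _).lt_top).ne⟩
    rwa [h0, measure_empty] at this
  have hex : ∀ η > 0, ∃ r > 0, μ (Metric.ball x r \ {x}) < η := by
    intro η hη
    obtain ⟨n, hn⟩ := (hlim.eventually (gt_mem_nhds hη)).exists
    exact ⟨_, by positivity, hn⟩
  have hat : μ {x} = 0 := by
    by_contra hne
    have hpos : 0 < μ {x} := pos_iff_ne_zero.2 hne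
    have hCD : (CD : ℝ≥0∞) ≠ 0 := by
      have := one_le_CD hd x
      simp only [ne_eq, ENNReal.coe_eq_zero]; rintro rfl; norm_num at this
    obtain ⟨r, hr, hlt⟩ := hex (μ {x} / CD) (ENNReal.div_pos hne ENNReal.coe_ne_top)
    obtain ⟨a, ha, hax⟩ : ∃ a ∈ Metric.ball x (r / 2), a ≠ x := by
      have : Metric.ball x (r / 2) ∈ 𝓝 x := ball_mem_nhds x (by positivity)
      have h2 := inter_mem (mem_nhdsWithin_of_mem_nhds this) (self_mem_nhdsWithin (s := {x}ᶜ) (a := x))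
      obtain ⟨a, h⟩ := hx.nonempty_of_mem h2
      exact ⟨a, h.1, h.2⟩
    have hda : 0 < dist a x := dist_pos.2 hax
    have h1 := hd.2 a (dist a x) hda
    have h2 : μ {x} ≤ μ (Metric.ball a (2 * dist a x)) := measure_mono (by
      rw [singleton_subset_iff, mem_ball, dist_comm]; linarith)
    have h3 : μ (Metric.ball a (dist a x)) ≤ μ (Metric.ball x r \ {x}) := by
      apply measure_mono
      intro z hz
      rw [mem_ball] at hz ha
      refine ⟨?_, ?_⟩
      · rw [mem_ball]; have := dist_triangle z a x; linarith
      · rintro rfl; rw [dist_comm] at hz; exact lt_irrefl _ hz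
    have h4 : μ {x} / CD ≤ μ (Metric.ball x r \ {x}) := by
      refine le_trans ?_ h3
      rw [ENNReal.div_le_iff_le_mul (Or.inl hCD) (Or.inl ENNReal.coe_ne_top), mul_comm]
      exact h2.trans h1
    exact absurd hlt (not_lt.2 h4)
  obtain ⟨r, hr, hlt⟩ := hex (ENNReal.ofReal (ε ^ 2)) (by simp; positivity)
  refine ⟨r, hr, ?_⟩
  rw [gg, Real.sqrt_lt' hε, measureReal_def, ← ENNReal.lt_ofReal_iff_toReal_lt (hd.fin x r)]
  rwa [measure_sdiff_null hat] at hlt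

end basics

section basics3
variable {X : Type*} [MetricSpace X] [MeasurableSpace X] {μ : Measure X} {CD CW : ℝ≥0}

lemma exists_net {K : Set X} (hK : IsCompact K) {δ : ℝ} (hδ : 0 < δ) :
    ∃ N : Finset X, (∀ p ∈ N, p ∈ K) ∧ (∀ p ∈ N, ∀ p' ∈ N, p ≠ p' → δ < dist p p') ∧
      ∀ z ∈ K, ∃ p ∈ N, dist z p ≤ δ := by
  classical
  set ε : ℝ≥0 := ⟨δ, hδ.le⟩ with hε
  have hε0 : ε / 2 ≠ 0 := by
    have : ε ≠ 0 := by intro h; rw [hε] at h; exact hδ.ne' (congrArg NNReal.toReal h)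
    positivity
  have hfin : packingNumber ε K ≠ ⊤ := by
    obtain ⟨N, hN, hNf, hc⟩ := exists_finite_isCover_of_isCompact hε0 hK
    have h1 := packingNumber_two_mul_le_externalCoveringNumber (ε / 2) K
    have h2 := hc.externalCoveringNumber_le_encard
    rw [mul_div_cancel₀ _ two_ne_zero] at h1
    exact ((h1.trans h2).trans_lt (Set.encard_lt_top_iff.2 hNf)).ne
  have hf : (maximalSeparatedSet ε K).Finite := by
    rw [← Set.encard_lt_top_iff, encard_maximalSeparatedSet hfin]; exact hfin.lt_top
  have hcov := isCover_maximalSeparatedSet hfin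
  have hsep := isSeparated_maximalSeparatedSet (ε := ε) (A := K)
  refine ⟨hf.toFinset, ?_, ?_, ?_⟩
  · intro p hp; exact maximalSeparatedSet_subset (hf.mem_toFinset.1 hp)
  · intro p hp p' hp' hne
    have this : (ε : ℝ≥0∞) < edist p p' := hsep (hf.mem_toFinset.1 hp) (hf.mem_toFinset.1 hp') hne
    rw [edist_nndist] at this
    have h2 : ε < nndist p p' := by exact_mod_cast this
    exact_mod_cast h2
  · intro z hz
    rw [isCover_iff_subset_iUnion_closedBall] at hcov
    obtain ⟨p, hp⟩ := mem_iUnion.1 (hcov hz)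
    simp only [mem_iUnion, mem_closedBall, exists_prop] at hp
    exact ⟨p, hf.mem_toFinset.2 hp.1, hp.2⟩

lemma sum_lemma {ι : Type*} (N : Finset ι) (m G d : ι → ℝ) (hm : ∀ p ∈ N, 0 ≤ m p) (hG : ∀ p ∈ N, 0 < G p)
    (h : ∀ p ∈ N, ∑ p' ∈ N with d p' ≤ d p, m p' ≤ G p) :
    ∑ p ∈ N, m p / Real.sqrt (G p) ≤ 2 * Real.sqrt (∑ p ∈ N, m p) := by
  classical
  induction N using Finset.induction_on_max_value d with
  | empty => simp
  | insert a s ha hmax ih =>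
    have ih' := ih (fun p hp => hm p (Finset.mem_insert_of_mem hp)) (fun p hp => hG p (Finset.mem_insert_of_mem hp))
      (fun p hp => le_trans (Finset.sum_le_sum_of_subset_of_nonneg
        (Finset.filter_subset_filter _ (Finset.subset_insert a s))
        (fun i hi _ => hm i (Finset.mem_filter.1 hi).1)) (h p (Finset.mem_insert_of_mem hp)))
    rw [Finset.sum_insert ha, Finset.sum_insert ha]
    set S := ∑ p ∈ s, m p with hS
    have hS0 : 0 ≤ S := Finset.sum_nonneg fun p hp => hm p (Finset.mem_insert_of_mem hp)
    have hma : 0 ≤ m a := hm a (Finset.mem_insert_self _ _)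
    have hGa := h a (Finset.mem_insert_self _ _)
    have hGp := hG a (Finset.mem_insert_self _ _)
    rw [Finset.filter_true_of_mem (by
      intro x hx
      rcases Finset.mem_insert.1 hx with rfl | hx
      · exact le_rfl
      · exact hmax x hx), Finset.sum_insert ha] at hGa
    rcases hma.eq_or_lt with h0 | h0
    · rw [← h0]; simpa using ih'
    set u := Real.sqrt S with hu
    set v := Real.sqrt (m a + S) with hv
    have hv0 : 0 < v := Real.sqrt_pos.2 (by linarith)
    have hvG : v ≤ Real.sqrt (G a) := Real.sqrt_le_sqrt hGa
    have h1 : m a / Real.sqrt (G a) ≤ m a / v := div_le_div_of_nonneg_left hma hv0 hvG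
    have h2 : m a = v ^ 2 - u ^ 2 := by
      rw [hv, hu, Real.sq_sqrt (by linarith), Real.sq_sqrt hS0]; ring
    have h3 : m a / v ≤ 2 * v - 2 * u := by
      rw [div_le_iff₀ hv0, h2]; nlinarith [sq_nonneg (v - u)]
    linarith

def chainG (J : Finset X) (ρ : ℝ) : SimpleGraph X where
  Adj p p' := p ≠ p' ∧ p ∈ J ∧ p' ∈ J ∧ dist p p' ≤ ρ
  symm := ⟨fun p p' h => ⟨h.1.symm, h.2.2.1, h.2.1, by rw [dist_comm]; exact h.2.2.2⟩⟩
  loopless := ⟨fun p h => h.1 rfl⟩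

lemma walk_le (hd : IsDoublingWith μ CD) {J : Finset X} {ρ : ℝ} {a b : X} (W : (chainG J ρ).Walk a b) :
    qDelta μ 2 ρ a b ≤ (W.support.map (fun p => ENNReal.ofReal (gg μ p (2 * ρ)))).sum := by
  induction W with
  | nil => rw [qDelta_self]; simp
  | cons h p ih =>
    rw [SimpleGraph.Walk.support_cons, List.map_cons, List.sum_cons]
    exact (qDelta_cons 2 h.2.2.2 _).trans (add_le_add (pair_le hd h.2.2.2) ih)

lemma walk_mem {J : Finset X} {ρ : ℝ} {a b : X} (W : (chainG J ρ).Walk a b) (ha : a ∈ J) :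
    ∀ p ∈ W.support, p ∈ J := by
  induction W with
  | nil => simpa using ha
  | cons h p ih =>
    intro z hz
    rw [SimpleGraph.Walk.support_cons, List.mem_cons] at hz
    rcases hz with rfl | hz
    · exact ha
    · exact ih h.2.2.1 z hz

lemma reach_le (hd : IsDoublingWith μ CD) {J : Finset X} {ρ : ℝ} {a b : X} (ha : a ∈ J)
    (h : (chainG J ρ).Reachable a b) :
    qDelta μ 2 ρ a b ≤ ENNReal.ofReal (∑ p ∈ J, gg μ p (2 * ρ)) := by
  classical
  obtain ⟨W, hW⟩ := h.exists_isPath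
  refine (walk_le hd W).trans ?_
  rw [← List.sum_toFinset _ hW.support_nodup, ENNReal.ofReal_sum_of_nonneg (fun _ _ => gg_nonneg _ _)]
  exact Finset.sum_le_sum_of_subset (fun p hp => walk_mem W ha p (List.mem_toFinset.1 hp))

lemma unif [BorelSpace X] (hd : IsDoublingWith μ CD) (hw : IsWMDM μ 2 CW) (hiso : ∀ x : X, (𝓝[≠] x).NeBot)
    (hCW : 0 < CW) {K : Set X} (hK : IsCompact K) {σ : ℝ} (hσ : 0 < σ) :
    ∃ δ₀ > 0, ∀ δ ≤ δ₀, ∀ a ∈ K, ∀ b ∈ K, σ ≤ dist a b →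
      ENNReal.ofReal (gg μ a (dist a b)) ≤ ENNReal.ofReal (2 * CW * Real.sqrt CD) * qDelta μ 2 δ a b := by
  have hS : IsCompact ((K ×ˢ K) ∩ {p : X × X | σ ≤ dist p.1 p.2}) :=
    (hK.prod hK).inter_right (isClosed_le continuous_const continuous_dist)
  have main : ∃ δ₀ > 0, ∀ δ ≤ δ₀, ∀ p ∈ (K ×ˢ K) ∩ {p : X × X | σ ≤ dist p.1 p.2},
      ENNReal.ofReal (gg μ p.1 (dist p.1 p.2)) ≤
        ENNReal.ofReal (2 * CW * Real.sqrt CD) * qDelta μ 2 δ p.1 p.2 := by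
    refine hS.induction_on (p := fun s => ∃ δ₀ > 0, ∀ δ ≤ δ₀, ∀ p ∈ s,
      ENNReal.ofReal (gg μ p.1 (dist p.1 p.2)) ≤
        ENNReal.ofReal (2 * CW * Real.sqrt CD) * qDelta μ 2 δ p.1 p.2) ?_ ?_ ?_ ?_
    · exact ⟨1, one_pos, by simp⟩
    · rintro s t hst ⟨δ, hδ, h⟩; exact ⟨δ, hδ, fun δ' h' p hp => h δ' h' p (hst hp)⟩
    · rintro s t ⟨δ, hδ, h⟩ ⟨δ', hδ', h'⟩
      refine ⟨min δ δ', lt_min hδ hδ', fun e he p hp => ?_⟩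
      rcases hp with hp | hp
      · exact h e (he.trans (min_le_left _ _)) p hp
      · exact h' e (he.trans (min_le_right _ _)) p hp
    · rintro ⟨a, b⟩ ⟨-, hab⟩
      simp only [mem_setOf_eq] at hab
      set ρ := dist a b with hρ
      have hρ0 : 0 < ρ := hσ.trans_le hab
      set m := gg μ a ρ with hm
      have hm0 : 0 < m := gg_pos hd a hρ0
      have hC : (0 : ℝ) < CW := hCW
      obtain ⟨δ₀, hδ₀, hq⟩ : ∃ δ₀ > 0, ENNReal.ofReal (3 * m / (4 * CW)) < qDelta μ 2 δ₀ a b := by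
        by_contra hcon
        push Not at hcon
        have h1 := qmu_le hcon
        have h2 := (le_pair hd a b).trans ((hw a b).trans (mul_le_mul_right h1 (CW : ℝ≥0∞)))
        rw [← hρ, ← hm, ← ENNReal.ofReal_coe_nnreal, ← ENNReal.ofReal_mul hC.le,
          ENNReal.ofReal_le_ofReal_iff (by positivity)] at h2
        have : (CW : ℝ) * (3 * m / (4 * CW)) = 3 / 4 * m := by field_simp
        rw [this] at h2; linarith
      have hτ : 0 < m / (8 * CW) := by positivity
      obtain ⟨ra, hra, hga⟩ := gg_small hd a (hiso a) hτ
      obtain ⟨rb, hrb, hgb⟩ := gg_small hd b (hiso b) hτ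
      set e := min (min (ra / 2) (rb / 2)) (min δ₀ (ρ / 4)) with he
      have he0 : 0 < e := by positivity
      have hea : 2 * e ≤ ra := by have := (min_le_left _ _ : e ≤ _).trans (min_le_left _ _); linarith
      have heb : 2 * e ≤ rb := by have := (min_le_left _ _ : e ≤ _).trans (min_le_right _ _); linarith
      have heδ : e ≤ δ₀ := (min_le_right _ _ : e ≤ _).trans (min_le_left _ _)
      have heρ : e ≤ ρ / 4 := (min_le_right _ _ : e ≤ _).trans (min_le_right _ _)
      refine ⟨Metric.ball a e ×ˢ Metric.ball b e, mem_nhdsWithin_of_mem_nhds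
        (prod_mem_nhds (ball_mem_nhds a he0) (ball_mem_nhds b he0)), δ₀, hδ₀, ?_⟩
      rintro δ hδ ⟨a', b'⟩ ⟨ha, hb⟩
      simp only [mem_ball] at ha hb
      simp only
      refine le_trans ?_ (mul_le_mul_right (qDelta_anti 2 hδ a' b') _)
      by_cases htop : qDelta μ 2 δ₀ a' b' = ⊤
      · rw [htop, ENNReal.mul_top]
        · exact le_top
        · have := one_le_kap hd a
          simp only [ne_eq, ENNReal.ofReal_eq_zero, not_le]; positivity
      obtain ⟨v, hv0, hv⟩ : ∃ v : ℝ, 0 ≤ v ∧ qDelta μ 2 δ₀ a' b' = ENNReal.ofReal v :=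
        ⟨_, ENNReal.toReal_nonneg, (ENNReal.ofReal_toReal htop).symm⟩
      have h1 : qDelta μ 2 δ₀ a b ≤ ENNReal.ofReal (m / (8 * CW)) + (ENNReal.ofReal v + ENNReal.ofReal (m / (8 * CW))) := by
        have ha' : dist a a' ≤ e := by rw [dist_comm]; exact ha.le
        have hb' : dist b b' ≤ e := by rw [dist_comm]; exact hb.le
        refine (qDelta_cons 2 (ha'.trans heδ) b).trans (add_le_add ?_ ?_)
        · refine (pair_le hd ha').trans (ENNReal.ofReal_le_ofReal (le_trans ?_ hga.le))
          exact gg_mono hd (ball_subset_ball hea)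
        · refine (qDelta_snoc 2 (hb.le.trans heδ) a').trans (add_le_add hv.le ?_)
          rw [pairBall_comm]
          refine (pair_le hd hb').trans (ENNReal.ofReal_le_ofReal (le_trans ?_ hgb.le))
          exact gg_mono hd (ball_subset_ball heb)
      rw [← ENNReal.ofReal_add hv0 hτ.le, ← ENNReal.ofReal_add hτ.le (by positivity)] at h1
      have h2 := hq.trans_le h1
      rw [ENNReal.ofReal_lt_ofReal_iff (by positivity)] at h2
      have h3 : m ≤ 2 * CW * v := by
        have e1 : 3 * m / (4 * CW) = 3 / 4 * (m / CW) := by field_simp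
        have e2 : m / (8 * CW) = 1 / 8 * (m / CW) := by field_simp
        rw [e1, e2] at h2
        have h5 : m / CW ≤ 2 * v := by linarith
        rw [div_le_iff₀ hC] at h5; linarith
      rw [hv, ← ENNReal.ofReal_mul (by positivity)]
      apply ENNReal.ofReal_le_ofReal
      have h4 : gg μ a' (dist a' b') ≤ gg μ a (2 * ρ) := by
        apply gg_mono hd
        intro z hz
        rw [mem_ball] at *
        have t1 := dist_triangle z a' a
        have t2 := dist_triangle4 a' a b b'
        rw [dist_comm b b'] at t2
        linarith
      calc gg μ a' (dist a' b') ≤ gg μ a (2 * ρ) := h4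
        _ ≤ Real.sqrt CD * m := gg_double hd a hρ0
        _ ≤ Real.sqrt CD * (2 * CW * v) := by gcongr
        _ = _ := by ring
  obtain ⟨δ₀, h0, h⟩ := main
  exact ⟨δ₀, h0, fun δ hδ a ha b hb hab => h δ hδ (a, b) ⟨⟨ha, hb⟩, hab⟩⟩

end basics3

section chart
variable {X : Type*} [MetricSpace X]

lemma exists_chart (hhom : ∃ Ω₀ : Set ↥Sphere2, IsCircleDomainS2 Ω₀ ∧ Nonempty (X ≃ₜ ↥Ω₀)) (x : X) :
    ∃ j : Pl → X, IsOpenEmbedding j ∧ j 0 = x := by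
  obtain ⟨Ω, hΩ, ⟨h⟩⟩ := hhom
  have : Nonempty X := ⟨x⟩
  have : Fact (Module.finrank ℝ (EuclideanSpace ℝ (Fin 3)) = 2 + 1) := ⟨by simp⟩
  have hφ : IsOpenEmbedding (Subtype.val ∘ h : X → ↥Sphere2) :=
    hΩ.1.isOpenEmbedding_subtypeVal.comp h.isOpenEmbedding
  let c : OpenPartialHomeomorph (↥Sphere2) Pl := chartAt (EuclideanSpace ℝ (Fin 2)) ((Subtype.val ∘ h : X → ↥Sphere2) x)
  let ψ : OpenPartialHomeomorph X Pl := (hφ.toOpenPartialHomeomorph _).trans c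
  have hx : x ∈ ψ.source := by
    simp only [ψ, OpenPartialHomeomorph.trans_source, c]
    refine ⟨by simp, ?_⟩
    simp only [mem_preimage]
    exact mem_chart_source (EuclideanSpace ℝ (Fin 2)) _
  have ht : ψ x ∈ ψ.target := ψ.map_source hx
  obtain ⟨r, hr, hb⟩ := Metric.isOpen_iff.1 ψ.open_target _ ht
  let J : OpenPartialHomeomorph Pl X := (OpenPartialHomeomorph.univBall (ψ x) r).trans ψ.symm
  have hs : J.source = univ := by
    simp only [J, OpenPartialHomeomorph.trans_source, OpenPartialHomeomorph.univBall_source, univ_inter]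
    rw [eq_univ_iff_forall]
    intro z
    simp only [mem_preimage, OpenPartialHomeomorph.symm_source]
    apply hb
    rw [← OpenPartialHomeomorph.univBall_target _ hr]
    exact OpenPartialHomeomorph.map_source _ (by simp)
  refine ⟨J, J.isOpenEmbedding hs, ?_⟩
  simp only [J, OpenPartialHomeomorph.trans_apply, OpenPartialHomeomorph.univBall_apply_zero]
  exact ψ.left_inv hx

lemma chart_iso {x : X} {j : Pl → X} (hj : IsOpenEmbedding j) (hx : j 0 = x) : (𝓝[≠] x).NeBot := by
  have h := (hj.continuous.tendsto (0 : Pl))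
  rw [hx] at h
  have ht : Tendsto j (𝓝[≠] (0 : Pl)) (𝓝[≠] x) := by
    apply tendsto_nhdsWithin_of_tendsto_nhds_of_eventually_within
    · exact h.mono_left nhdsWithin_le_nhds
    · filter_upwards [self_mem_nhdsWithin] with z hz
      intro hz2
      exact hz (hj.injective (by rw [hx]; exact hz2))
  have : (𝓝[≠] (0 : Pl)).NeBot := inferInstance
  exact ht.neBot

lemma chart_ball {x : X} {j : Pl → X} (hj : IsOpenEmbedding j) (hx : j 0 = x) :
    ∃ R > 0, IsCompact (closedBall x R) ∧ closedBall x R ⊆ range j := by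
  have hK : IsCompact (j '' closedBall 0 1) := (isCompact_closedBall _ _).image hj.continuous
  have hn : j '' closedBall 0 1 ∈ 𝓝 x := by
    rw [← hx]; exact hj.isOpenMap.image_mem_nhds (closedBall_mem_nhds _ one_pos)
  obtain ⟨R, hR, h⟩ := Metric.nhds_basis_closedBall.mem_iff.1 hn
  exact ⟨R, hR, hK.of_isClosed_subset isClosed_closedBall h, h.trans (image_subset_range _ _)⟩

lemma CW_pos [MeasurableSpace X] {μ : Measure X} {CD CW : ℝ≥0} (hd : IsDoublingWith μ CD) (hw : IsWMDM μ 2 CW)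
    {x : X} (hx : (𝓝[≠] x).NeBot) : 0 < CW := by
  obtain ⟨y, hy⟩ := hx.nonempty_of_mem self_mem_nhdsWithin
  by_contra h
  have h0 : CW = 0 := by simpa using h
  have h1 := (le_pair hd x y).trans (hw x y)
  rw [h0] at h1
  simp only [ENNReal.coe_zero, zero_mul, nonpos_iff_eq_zero, ENNReal.ofReal_eq_zero] at h1
  exact absurd (gg_pos hd x (dist_pos.2 (Ne.symm hy))) (not_lt.2 h1)
end chart

section topo
variable {X : Type*} [MetricSpace X]

def Cset (x : X) (R δ : ℝ) : Option X → Set X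
  | none => (Metric.ball x R)ᶜ
  | some p => closedBall p δ

lemma Cset_closed (x : X) (R δ : ℝ) (i : Option X) : IsClosed (Cset x R δ i) := by
  cases i with
  | none => exact isOpen_ball.isClosed_compl
  | some p => exact isClosed_closedBall

lemma level_sep [DecidableEq X] {j : Pl → X} (hj : IsOpenEmbedding j) {x' y' : Pl} {R δ : ℝ} (hR : 0 < R)
    (hy : j y' ∈ Metric.ball (j x') R) (N S : Finset X) (hN : ∀ z ∈ closedBall (j x') R, ∃ p ∈ N, dist z p ≤ δ)
    (D : X → ℝ≥0∞) (t : ℝ≥0∞)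
    (hS : ∀ p ∈ N, ∀ p' ∈ N, dist p p' ≤ 2 * δ → D p < t → t ≤ D p' → p ∈ S)
    (hSx : ∀ p ∈ S, δ < dist p (j x')) (hSy : ∀ p ∈ S, δ < dist p (j y'))
    (hx1 : ∀ p ∈ N, dist p (j x') ≤ δ → D p < t) (hy1 : ∀ p ∈ N, dist p (j y') ≤ δ → t ≤ D p) :
    TSep (⋃ i ∈ insert none (S.image some), j ⁻¹' (Cset (j x') R δ i)) x' y' := by
  classical
  set KS : Set X := ⋃ p ∈ S, closedBall p δ with hKS
  set U' : Set X := ⋃ p ∈ N.filter (fun p => D p < t), closedBall p δ with hU'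
  set V' : Set X := ⋃ p ∈ N.filter (fun p => t ≤ D p), closedBall p δ with hV'
  have cl : ∀ F : Finset X, IsClosed (⋃ p ∈ F, closedBall p δ) := fun F =>
    F.finite_toSet.isClosed_biUnion (fun _ _ => isClosed_closedBall)
  have hcov : ∀ z ∈ Metric.ball (j x') R, z ∈ U' ∨ z ∈ V' := by
    intro z hz
    obtain ⟨p, hp, hd⟩ := hN z (ball_subset_closedBall hz)
    rcases lt_or_ge (D p) t with h | h
    · left; simp only [hU', mem_iUnion]; exact ⟨p, by simp [hp, h], hd⟩
    · right; simp only [hV', mem_iUnion]; exact ⟨p, by simp [hp, h], hd⟩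
  have hboth : ∀ z, z ∈ U' → z ∈ V' → z ∈ KS := by
    intro z h1 h2
    simp only [hU', hV', mem_iUnion, Finset.mem_filter, mem_closedBall, exists_prop] at h1 h2
    obtain ⟨p, ⟨hp, hpt⟩, hpd⟩ := h1
    obtain ⟨p', ⟨hp', hpt'⟩, hpd'⟩ := h2
    simp only [hKS, mem_iUnion, mem_closedBall, exists_prop]
    refine ⟨p, hS p hp p' hp' ?_ hpt hpt', hpd⟩
    have := dist_triangle_left p p' z
    linarith
  have hK : (⋃ i ∈ insert none (S.image some), j ⁻¹' (Cset (j x') R δ i)) =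
      j ⁻¹' ((Metric.ball (j x') R)ᶜ ∪ KS) := by
    ext z
    simp [Cset, hKS]
  rw [hK]
  refine ⟨j ⁻¹' (Metric.ball (j x') R ∩ (KS ∪ V')ᶜ), j ⁻¹' (Metric.ball (j x') R ∩ (KS ∪ U')ᶜ), ?_, ?_, ?_, ?_, ?_, ?_⟩
  · exact (isOpen_ball.inter ((cl _).union (cl _)).isOpen_compl).preimage hj.continuous
  · exact (isOpen_ball.inter ((cl _).union (cl _)).isOpen_compl).preimage hj.continuous
  · rw [Set.disjoint_left]
    rintro z ⟨h1, h2⟩ ⟨h3, h4⟩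
    rcases hcov _ h1 with h | h
    · exact h4 (Or.inr h)
    · exact h2 (Or.inr h)
  · ext z
    simp only [mem_union, mem_preimage, mem_inter_iff, mem_compl_iff]
    have h1 := hcov (j z)
    have h2 := hboth (j z)
    tauto
  · refine ⟨mem_ball_self hR, ?_⟩
    rintro (h | h)
    · simp only [hKS, mem_iUnion, mem_closedBall, exists_prop] at h
      obtain ⟨p, hp, hpd⟩ := h
      have := hSx p hp
      rw [dist_comm] at this; linarith
    · simp only [hV', mem_iUnion, Finset.mem_filter, mem_closedBall, exists_prop] at h
      obtain ⟨p, ⟨hp, hpt⟩, hpd⟩ := h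
      rw [dist_comm] at hpd
      exact absurd (hx1 p hp hpd) (not_lt.2 hpt)
  · refine ⟨hy, ?_⟩
    rintro (h | h)
    · simp only [hKS, mem_iUnion, mem_closedBall, exists_prop] at h
      obtain ⟨p, hp, hpd⟩ := h
      have := hSy p hp
      rw [dist_comm] at this; linarith
    · simp only [hU', mem_iUnion, Finset.mem_filter, mem_closedBall, exists_prop] at h
      obtain ⟨p, ⟨hp, hpt⟩, hpd⟩ := h
      rw [dist_comm] at hpd
      exact absurd hpt (not_lt.2 (hy1 p hp hpd))

lemma min_sep [DecidableEq X] {j : Pl → X} (hj : IsOpenEmbedding j) {x' y' : Pl} {R δ τ : ℝ} (hτ : τ ≤ R) (hδR : δ ≤ R)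
    (hδ : 0 ≤ δ)
    (hcpt : IsCompact (closedBall (j x') (2 * R))) (hrange : closedBall (j x') (2 * R) ⊆ range j)
    {L : Set X} (hL : IsPreconnected L) (hLs : L ⊆ Metric.ball (j x') τ) (hxL : j x' ∈ L) (hyL : j y' ∈ L)
    (S : Finset X) (hSR : ∀ p ∈ S, dist p (j x') ≤ R)
    (hs : TSep (⋃ i ∈ insert none (S.image some), j ⁻¹' (Cset (j x') R δ i)) x' y') :
    ∃ J ⊆ S, ∃ a ∈ J, dist a (j x') < τ + δ ∧
      ((∃ b ∈ J, (chainG J (2 * δ)).Reachable a b ∧ R ≤ dist b (j x') + δ) ∨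
       ((∀ b ∈ J, (chainG J (2 * δ)).Reachable a b) ∧ TSep (⋃ p ∈ J, closedBall p δ) (j x') (j y'))) := by
  classical
  obtain ⟨𝒥, h𝒥, hsep, hmin⟩ := sep_min _ _ hs
  set J := Finset.eraseNone 𝒥 with hJ
  have hR0 : 0 ≤ R := hδ.trans hδR
  have hLr : L ⊆ range j := by
    intro z hz
    apply hrange
    have := hLs hz
    rw [mem_ball] at this; rw [mem_closedBall]; linarith
  obtain ⟨z, hz1, hz2⟩ := hsep.meets (hL.preimage_of_isOpenMap hj.injective hj.isOpenMap hLr) hxL hyL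
  simp only [mem_iUnion, exists_prop] at hz2
  obtain ⟨i, hi, hzi⟩ := hz2
  have hzb : dist (j z) (j x') < τ := hLs hz1
  have hia : ∃ a, i = some a := by
    cases i with
    | none => exact absurd (show j z ∈ Metric.ball (j x') R from by rw [mem_ball]; linarith) hzi
    | some a => exact ⟨a, rfl⟩
  obtain ⟨a, rfl⟩ := hia
  have haJ : a ∈ J := Finset.mem_eraseNone.2 hi
  have hza : dist (j z) a ≤ δ := hzi
  refine ⟨J, ?_, a, haJ, ?_, ?_⟩
  · intro p hp
    have := h𝒥 (Finset.mem_eraseNone.1 hp)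
    simpa using this
  · have := dist_triangle_left a (j x') (j z)
    linarith
  by_cases hcase : ∃ b ∈ J, (chainG J (2 * δ)).Reachable a b ∧ R ≤ dist b (j x') + δ
  · exact Or.inl hcase
  right
  push Not at hcase
  set J1 := 𝒥.filter (fun i => ∃ p, i = some p ∧ (chainG J (2 * δ)).Reachable a p) with hJ1
  have hJ1s : J1 ⊆ 𝒥 := Finset.filter_subset _ _
  have clo : ∀ F : Finset (Option X), IsClosed (⋃ i ∈ F, j ⁻¹' (Cset (j x') R δ i)) := fun F =>
    F.finite_toSet.isClosed_biUnion (fun i _ => (Cset_closed _ _ _ i).preimage hj.continuous)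
  have hun : (⋃ i ∈ J1, j ⁻¹' (Cset (j x') R δ i)) ∪ (⋃ i ∈ 𝒥 \ J1, j ⁻¹' (Cset (j x') R δ i))
      = ⋃ i ∈ 𝒥, j ⁻¹' (Cset (j x') R δ i) := by
    rw [← Finset.set_biUnion_union, Finset.union_sdiff_of_subset hJ1s]
  have hdis : Disjoint (⋃ i ∈ J1, j ⁻¹' (Cset (j x') R δ i)) (⋃ i ∈ 𝒥 \ J1, j ⁻¹' (Cset (j x') R δ i)) := by
    rw [Set.disjoint_left]
    intro u h1 h2
    simp only [mem_iUnion, exists_prop] at h1 h2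
    obtain ⟨i1, hi1, hu1⟩ := h1
    obtain ⟨i2, hi2, hu2⟩ := h2
    obtain ⟨hi1J, p, rfl, hreach⟩ := Finset.mem_filter.1 hi1
    have hpJ : p ∈ J := Finset.mem_eraseNone.2 hi1J
    have hup : dist (j u) p ≤ δ := hu1
    rw [Finset.mem_sdiff] at hi2
    cases i2 with
    | none =>
      have h3 : ¬ dist (j u) (j x') < R := hu2
      have h4 := hcase p hpJ hreach
      have := dist_triangle (j u) p (j x')
      apply h3; linarith
    | some p' =>
      have hup' : dist (j u) p' ≤ δ := hu2
      apply hi2.2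
      refine Finset.mem_filter.2 ⟨hi2.1, p', rfl, ?_⟩
      by_cases hpp : p = p'
      · rw [← hpp]; exact hreach
      · refine hreach.trans (SimpleGraph.Adj.reachable ⟨hpp, hpJ, Finset.mem_eraseNone.2 hi2.1, ?_⟩)
        have := dist_triangle_left p p' (j u)
        linarith
  have hsp := sep_union plane_lift (clo J1) (clo (𝒥 \ J1)) hdis (x := x') (y := y') (by rw [hun]; exact hsep)
  have haJ1 : some a ∈ J1 := Finset.mem_filter.2 ⟨hi, a, rfl, SimpleGraph.Reachable.refl _⟩
  have hEq : J1 = 𝒥 := by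
    rcases hsp with h | h
    · by_contra hne
      exact hmin J1 (lt_of_le_of_ne hJ1s hne) h
    · exfalso
      refine hmin _ ?_ h
      exact Finset.sdiff_ssubset hJ1s ⟨_, haJ1⟩
  refine ⟨?_, ?_⟩
  · intro b hb
    have : some b ∈ J1 := by rw [hEq]; exact Finset.mem_eraseNone.1 hb
    obtain ⟨_, p, hp, hr⟩ := Finset.mem_filter.1 this
    cases hp; exact hr
  · have hJS : ∀ p ∈ J, dist p (j x') ≤ R := by
      intro p hp
      have := h𝒥 (Finset.mem_eraseNone.1 hp)
      exact hSR p (by simpa using this)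
    have hsub : (⋃ p ∈ J, closedBall p δ) ⊆ closedBall (j x') (2 * R) := by
      intro u hu
      simp only [mem_iUnion, exists_prop, mem_closedBall] at hu
      obtain ⟨p, hp, hu⟩ := hu
      have := dist_triangle u p (j x')
      have := hJS p hp
      rw [mem_closedBall]; linarith
    have hcl : IsClosed (⋃ p ∈ J, closedBall p δ) :=
      J.finite_toSet.isClosed_biUnion (fun _ _ => isClosed_closedBall)
    apply sep_global j hj (hcpt.of_isClosed_subset hcl hsub) (hsub.trans hrange)
    convert hsep using 1
    ext u
    simp only [mem_preimage, mem_iUnion, exists_prop]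
    constructor
    · rintro ⟨p, hp, hu⟩
      exact ⟨some p, Finset.mem_eraseNone.1 hp, hu⟩
    · rintro ⟨i, hi, hu⟩
      have : i ∈ J1 := by rw [hEq]; exact hi
      obtain ⟨_, p, rfl, _⟩ := Finset.mem_filter.1 this
      exact ⟨p, Finset.mem_eraseNone.2 hi, hu⟩
end topo

section lvl
set_option linter.unusedSectionVars false
variable {X : Type*} [MetricSpace X] [MeasurableSpace X] {μ : Measure X} {CD CW : ℝ≥0}

lemma lam_le_ell {lam : ℝ} (hlam : 1 ≤ lam) : lam ≤ 2 ^ ellOf lam := by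
  have h1 : Real.logb 2 lam ≤ (ellOf lam : ℝ) := by
    refine (Int.le_ceil _).trans ?_
    have := Int.self_le_toNat (Int.ceil (Real.logb 2 lam))
    unfold ellOf
    exact_mod_cast this
  have h2 := (Real.logb_le_iff_le_rpow (by norm_num) (by linarith)).1 h1
  rwa [Real.rpow_natCast] at h2

lemma close_sum (J : Finset X) (w h : X → ℝ) (hw : ∀ p ∈ J, 0 ≤ w p) {g M G k : ℝ} (hG : 0 < G) (hM : 0 ≤ M)
    (h1 : g ≤ M * ∑ p ∈ J, w p) (hk : 0 ≤ k)
    (h2 : ∀ p ∈ J, 1 / G ≤ h p) (h3 : G ≤ k * g) : 1 ≤ M * k * ∑ p ∈ J, w p * h p := by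
  have h4 : (∑ p ∈ J, w p) * (1 / G) ≤ ∑ p ∈ J, w p * h p := by
    rw [Finset.sum_mul]
    exact Finset.sum_le_sum fun p hp => mul_le_mul_of_nonneg_left (h2 p hp) (hw p hp)
  have h5 : G ≤ M * k * ∑ p ∈ J, w p := by
    calc G ≤ k * g := h3
      _ ≤ k * (M * ∑ p ∈ J, w p) := by gcongr
      _ = _ := by ring
  calc 1 = G * (1 / G) := by field_simp
    _ ≤ (M * k * ∑ p ∈ J, w p) * (1 / G) := by gcongr
    _ = M * k * ((∑ p ∈ J, w p) * (1 / G)) := by ring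
    _ ≤ _ := by gcongr

lemma level_low (hd : IsDoublingWith μ CD) {lam : ℝ} (hlam : 1 ≤ lam) (hLLC : IsLLC X lam) {x y a : X} {r η δ : ℝ}
    (hr : 0 < r) (hη : 0 < η) (hδ : 0 < δ) (hδη : δ ≤ η / (16 * lam)) (hδr : δ ≤ lam * r / 4)
    (J : Finset X) (haJ : a ∈ J)
    (hJR : ∀ p ∈ J, dist p x ≤ 4 * lam * r)
    (hJx : ∀ p ∈ J, η / 2 ≤ dist p x) (hJy : ∀ p ∈ J, η / 2 ≤ dist p y)
    (hU : ∀ a ∈ closedBall x (2 * (4 * lam * r)), ∀ b ∈ closedBall x (2 * (4 * lam * r)),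
      min (η / (4 * lam)) (lam * r) ≤ dist a b →
      ENNReal.ofReal (gg μ a (dist a b)) ≤ ENNReal.ofReal (2 * CW * Real.sqrt CD) * qDelta μ 2 (2 * δ) a b)
    (hax : dist a x < lam * r + δ)
    (hcase : (∃ b ∈ J, (chainG J (2 * δ)).Reachable a b ∧ 4 * lam * r ≤ dist b x + δ) ∨
       ((∀ b ∈ J, (chainG J (2 * δ)).Reachable a b) ∧ TSep (⋃ p ∈ J, closedBall p δ) x y)) :
    1 ≤ (2 * CW * Real.sqrt CD) * Real.sqrt CD ^ (3 + ellOf lam) *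
      ∑ p ∈ J, gg μ p (2 * (2 * δ)) * (1 / gg μ x (dist x p) + 1 / gg μ y (dist y p)) := by
  have hlr : 0 < lam * r := by positivity
  have hk1 := one_le_kap hd x
  have hup : ∀ b ∈ J, (chainG J (2 * δ)).Reachable a b → min (η / (4 * lam)) (lam * r) ≤ dist a b →
      gg μ a (dist a b) ≤ (2 * CW * Real.sqrt CD) * ∑ p ∈ J, gg μ p (2 * (2 * δ)) := by
    intro b hb hre hσ
    have hin : ∀ p ∈ J, p ∈ closedBall x (2 * (4 * lam * r)) := by
      intro p hp; have := hJR p hp; rw [mem_closedBall]; nlinarith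
    have h1 := hU a (hin a haJ) b (hin b hb) hσ
    have h2 := reach_le hd haJ hre
    have h3 := h1.trans (mul_le_mul_right h2 _)
    rw [← ENNReal.ofReal_mul (by positivity)] at h3
    exact (ENNReal.ofReal_le_ofReal_iff (mul_nonneg (by positivity)
      (Finset.sum_nonneg fun _ _ => gg_nonneg _ _))).1 h3
  rcases hcase with ⟨b, hb, hre, hbR⟩ | ⟨hre, hsep⟩
  · have hab : 2 * (lam * r) ≤ dist a b := by
      have := dist_triangle_left b x a
      linarith
    have hG : gg μ x (4 * lam * r) ≤ Real.sqrt CD ^ (3 + ellOf lam) * gg μ a (dist a b) := by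
      calc gg μ x (4 * lam * r) ≤ gg μ a (2 ^ 2 * dist a b) := by
            apply gg_mono hd
            apply ball_subset_ball'
            rw [dist_comm]; linarith
        _ ≤ Real.sqrt CD ^ 2 * gg μ a (dist a b) := gg_pow hd a (by linarith) 2
        _ ≤ _ := by
            have : Real.sqrt CD ^ 2 ≤ Real.sqrt CD ^ (3 + ellOf lam) := pow_le_pow_right₀ hk1 (by omega)
            exact mul_le_mul_of_nonneg_right this (gg_nonneg _ _)
    refine close_sum J _ _ (fun p _ => gg_nonneg _ _) (gg_pos hd x (by positivity)) (by positivity)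
      (hup b hb hre ((min_le_right _ _).trans (by linarith))) (by positivity) ?_ hG
    intro p hp
    have h1 : 0 < gg μ x (dist x p) := gg_pos hd x (by have := hJx p hp; rw [dist_comm]; linarith)
    have h2 : gg μ x (dist x p) ≤ gg μ x (4 * lam * r) :=
      gg_mono hd (ball_subset_ball (by rw [dist_comm]; exact hJR p hp))
    have h3 : 0 ≤ 1 / gg μ y (dist y p) := div_nonneg zero_le_one (gg_nonneg _ _)
    have := one_div_le_one_div_of_le h1 h2
    linarith
  · obtain ⟨b, hb, hmax⟩ := J.exists_max_image (fun b => dist a b) ⟨a, haJ⟩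
    set s := dist a b with hs
    have hs0 : 0 ≤ s := dist_nonneg
    have ho : dist x a < lam * (s + 2 * δ) ∨ dist y a < lam * (s + 2 * δ) := by
      by_contra hno
      push Not at hno
      obtain ⟨K, hK, hKs, hxK, hyK⟩ := (hLLC a (lam * (s + 2 * δ)) (by positivity)).2 x y
        (by rw [mem_ball]; exact not_lt.2 hno.1) (by rw [mem_ball]; exact not_lt.2 hno.2)
      obtain ⟨z, hz1, hz2⟩ := hsep.meets hK.2.isPreconnected hxK hyK
      simp only [mem_iUnion, exists_prop, mem_closedBall] at hz2
      obtain ⟨p, hp, hzp⟩ := hz2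
      apply hKs hz1
      rw [mul_div_cancel_left₀ _ (by positivity), mem_ball]
      have h1 := hmax p hp
      have h2 := dist_triangle z p a
      rw [dist_comm p a] at h2
      linarith
    have fin : ∀ o : X, dist o a < lam * (s + 2 * δ) → (∀ p ∈ J, η / 2 ≤ dist p o) →
        (∀ p ∈ J, 1 / gg μ o (dist o p) ≤ 1 / gg μ x (dist x p) + 1 / gg μ y (dist y p)) →
        1 ≤ (2 * CW * Real.sqrt CD) * Real.sqrt CD ^ (3 + ellOf lam) *
      ∑ p ∈ J, gg μ p (2 * (2 * δ)) * (1 / gg μ x (dist x p) + 1 / gg μ y (dist y p)) := by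
      intro o hoa hJo hh
      have h1 := hJo a haJ
      rw [dist_comm] at h1
      have hlδ : lam * δ ≤ η / 16 := by
        rw [le_div_iff₀ (by positivity)] at hδη; linarith
      have h2 : η / 4 ≤ lam * s := by nlinarith
      have h2' : η / (4 * lam) ≤ s := by
        rw [div_le_iff₀ (by positivity)]; linarith
      have hsp : 0 < s := lt_of_lt_of_le (by positivity) h2'
      have h3 : 2 * δ ≤ s := by nlinarith
      have h4 : dist o a < 2 * (lam * s) := by nlinarith
      have h5 : s ≤ lam * s := by nlinarith
      have hG : gg μ o (3 * (lam * s)) ≤ Real.sqrt CD ^ (3 + ellOf lam) * gg μ a s := by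
        refine le_trans (gg_mono hd ?_) (gg_pow hd a hsp _)
        apply ball_subset_ball'
        have := lam_le_ell hlam
        rw [pow_add]
        nlinarith
      refine close_sum J _ _ (fun p _ => gg_nonneg _ _) (gg_pos hd o (by positivity)) (by positivity)
        (hup b hb (hre b hb) ((min_le_left _ _).trans h2')) (by positivity) ?_ hG
      intro p hp
      refine le_trans ?_ (hh p hp)
      apply one_div_le_one_div_of_le
      · exact gg_pos hd o (by have := hJo p hp; rw [dist_comm]; linarith)
      · apply gg_mono hd
        apply ball_subset_ball
        have h6 := hmax p hp
        have h7 := dist_triangle o a p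
        linarith
    rcases ho with ho | ho
    · refine fin x ho hJx fun p hp => ?_
      have h3 : 0 ≤ 1 / gg μ y (dist y p) := div_nonneg zero_le_one (gg_nonneg _ _)
      linarith
    · refine fin y ho hJy fun p hp => ?_
      have h3 : 0 ≤ 1 / gg μ x (dist x p) := div_nonneg zero_le_one (gg_nonneg _ _)
      linarith
end lvl

section coar
set_option linter.unusedSectionVars false
variable {X : Type*} [MetricSpace X] [MeasurableSpace X] [BorelSpace X] {μ : Measure X} {CD CW : ℝ≥0}

lemma coarea {ι : Type*} (F : Finset ι) (c a w : ι → ℝ) (hc : ∀ p ∈ F, 0 ≤ c p) (hw : ∀ p ∈ F, 0 ≤ w p) {T : ℝ}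
    (h : ∀ t ∈ Ioo 0 T, 1 ≤ ∑ p ∈ F with a p < t ∧ t ≤ a p + w p, c p) : T ≤ ∑ p ∈ F, c p * w p := by
  have h1 : ∀ t ∈ Ioo 0 T, (1 : ℝ≥0∞) ≤ ∑ p ∈ F, (Ioc (a p) (a p + w p)).indicator (fun _ => ENNReal.ofReal (c p)) t := by
    intro t ht
    have h2 := ENNReal.ofReal_le_ofReal (h t ht)
    rw [ENNReal.ofReal_one, ENNReal.ofReal_sum_of_nonneg (fun p hp => hc p (Finset.mem_filter.1 hp).1),
      Finset.sum_filter] at h2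
    refine h2.trans (le_of_eq (Finset.sum_congr rfl fun p _ => ?_))
    simp [Set.indicator_apply]
  have h3 : ENNReal.ofReal T ≤ ENNReal.ofReal (∑ p ∈ F, c p * w p) := by
    calc ENNReal.ofReal T = ∫⁻ t in Ioo 0 T, 1 := by simp
      _ ≤ ∫⁻ t in Ioo 0 T, ∑ p ∈ F, (Ioc (a p) (a p + w p)).indicator (fun _ => ENNReal.ofReal (c p)) t :=
          setLIntegral_mono' measurableSet_Ioo h1
      _ ≤ ∫⁻ t, ∑ p ∈ F, (Ioc (a p) (a p + w p)).indicator (fun _ => ENNReal.ofReal (c p)) t :=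
          setLIntegral_le_lintegral _ _
      _ = ∑ p ∈ F, ENNReal.ofReal (c p) * ENNReal.ofReal (w p) := by
          rw [lintegral_finsetSum _ (fun p _ => measurable_const.indicator measurableSet_Ioc)]
          refine Finset.sum_congr rfl fun p _ => ?_
          rw [lintegral_indicator measurableSet_Ioc]
          simp
      _ = _ := by
          rw [ENNReal.ofReal_sum_of_nonneg (fun p hp => mul_nonneg (hc p hp) (hw p hp))]
          exact Finset.sum_congr rfl fun p hp => (ENNReal.ofReal_mul (hc p hp)).symm
  exact (ENNReal.ofReal_le_ofReal_iff (Finset.sum_nonneg fun p hp => mul_nonneg (hc p hp) (hw p hp))).1 h3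

lemma pack_sum (hd : IsDoublingWith μ CD) (F : Finset X) {δ : ℝ}
    (hF : ∀ p ∈ F, ∀ p' ∈ F, p ≠ p' → δ < dist p p') {o : X} {ρ : ℝ}
    (ho : ∀ p ∈ F, dist p o + δ / 2 ≤ ρ) :
    ∑ p ∈ F, μ.real (Metric.ball p (δ / 2)) ≤ μ.real (Metric.ball o ρ) := by
  rw [← measureReal_biUnion_finset (μ := μ) (f := fun p => Metric.ball p (δ / 2)) (h := fun p _ => hd.fin p _)]
  · apply measureReal_mono _ (hd.fin _ _)
    refine iUnion₂_subset fun p hp => ball_subset_ball' ?_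
    linarith [ho p hp]
  · intro p hp p' hp' hne
    apply ball_disjoint_ball
    linarith [hF p hp p' hp' hne]
  · exact fun _ _ => measurableSet_ball

lemma sum_upper (hd : IsDoublingWith μ CD) (F : Finset X) {δ : ℝ} (hδ : 0 < δ)
    (hF : ∀ p ∈ F, ∀ p' ∈ F, p ≠ p' → δ < dist p p') (o x : X) {ρ : ℝ}
    (ho : ∀ p ∈ F, δ / 2 ≤ dist p o) (hx : ∀ p ∈ F, dist p x + δ / 2 ≤ ρ) :
    ∑ p ∈ F, μ.real (Metric.ball p (δ / 2)) * (1 / gg μ o (dist o p)) ≤ 2 * Real.sqrt CD * gg μ x ρ := by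
  have hC : (0:ℝ) < CD := by linarith [one_le_CD hd o]
  have hk : 0 < Real.sqrt CD := Real.sqrt_pos.2 hC
  have hop : ∀ p ∈ F, 0 < dist o p := fun p hp => by rw [dist_comm]; linarith [ho p hp]
  have h := sum_lemma F (fun p => μ.real (Metric.ball p (δ / 2))) (fun p => CD * μ.real (Metric.ball o (dist o p)))
    (fun p => dist p o) (fun p _ => measureReal_nonneg)
    (fun p hp => by
      have := gg_pos hd o (hop p hp)
      rw [← gg_sq]; positivity) ?_
  · have h2 : ∑ p ∈ F, μ.real (Metric.ball p (δ / 2)) * (1 / gg μ o (dist o p)) =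
        Real.sqrt CD * ∑ p ∈ F, μ.real (Metric.ball p (δ / 2)) / Real.sqrt (CD * μ.real (Metric.ball o (dist o p))) := by
      rw [Finset.mul_sum]
      refine Finset.sum_congr rfl fun p hp => ?_
      rw [Real.sqrt_mul (by positivity)]
      have := gg_pos hd o (hop p hp)
      change _ = Real.sqrt CD * (_ / (Real.sqrt CD * gg μ o (dist o p)))
      field_simp
    rw [h2]
    have h3 := Real.sqrt_le_sqrt (pack_sum hd F hF hx)
    have h4 : Real.sqrt CD * (∑ p ∈ F, μ.real (Metric.ball p (δ / 2)) / Real.sqrt (CD * μ.real (Metric.ball o (dist o p)))) ≤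
        Real.sqrt CD * (2 * gg μ x ρ) := by
      refine mul_le_mul_of_nonneg_left (h.trans ?_) hk.le
      exact mul_le_mul_of_nonneg_left h3 (by norm_num)
    linarith
  · intro p hp
    refine le_trans (pack_sum hd _ (fun p1 h1 p2 h2 => hF p1 (Finset.mem_filter.1 h1).1 p2 (Finset.mem_filter.1 h2).1)
      (o := o) (ρ := 2 * dist o p) ?_) (real_double hd o (hop p hp))
    intro p1 h1
    have := (Finset.mem_filter.1 h1).2
    have := ho p hp
    rw [dist_comm o p]
    linarith

lemma key (hd : IsDoublingWith μ CD) (hw : IsWMDM μ 2 CW) (hiso : ∀ x : X, (𝓝[≠] x).NeBot) (hCW : 0 < CW)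
    {lam : ℝ} (hlam : 1 ≤ lam) (hLLC : IsLLC X lam) {j : Pl → X} (hj : IsOpenEmbedding j) {x y : X} {r η : ℝ}
    (hr : 0 < r) (hη : 0 < η) (hy : y ∈ Metric.ball x r)
    (hcpt : IsCompact (closedBall x (2 * (4 * lam * r)))) (hrange : closedBall x (2 * (4 * lam * r)) ⊆ range j) :
    ∃ δ₁ > 0, ∀ δ > 0, δ ≤ δ₁ → ∀ T : ℝ, (∀ x1 ∈ Metric.ball x η, ∀ y1 ∈ Metric.ball y η,
        ENNReal.ofReal T ≤ qDelta μ 2 (2 * δ) x1 y1) →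
      T ≤ 8 * CW * (CD : ℝ) ^ (7 + ellOf lam) * gg μ x r := by
  classical
  have hlr : 0 < lam * r := by positivity
  have hrlr : r ≤ lam * r := by nlinarith
  obtain ⟨δ₀, hδ₀, hU⟩ := unif hd hw hiso hCW hcpt (σ := min (η / (4 * lam)) (lam * r)) (by positivity)
  refine ⟨min (δ₀ / 2) (min (η / (16 * lam)) (lam * r / 4)), by positivity, ?_⟩
  intro δ hδ hδ1 T hT
  have hδa : δ ≤ δ₀ / 2 := hδ1.trans (min_le_left _ _)
  have hδη : δ ≤ η / (16 * lam) := hδ1.trans ((min_le_right _ _).trans (min_le_left _ _))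
  have hδr : δ ≤ lam * r / 4 := hδ1.trans ((min_le_right _ _).trans (min_le_right _ _))
  have hδη' : δ ≤ η / 16 := by
    refine hδη.trans ?_
    apply div_le_div_of_nonneg_left hη.le (by norm_num); linarith
  obtain ⟨x', hx'⟩ : x ∈ range j := hrange (mem_closedBall_self (by positivity))
  obtain ⟨y', hy'⟩ : y ∈ range j := hrange (by
    rw [mem_ball] at hy; rw [mem_closedBall]; linarith)
  set R := 4 * lam * r with hR
  have hcR : IsCompact (closedBall x R) :=
    hcpt.of_isClosed_subset isClosed_closedBall (closedBall_subset_closedBall (by linarith))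
  obtain ⟨N, hNK, hNsep, hNcov⟩ := exists_net hcR hδ
  set D : X → ℝ≥0∞ := fun z => ⨅ x1 ∈ Metric.ball x η, qDelta μ 2 (2 * δ) x1 z with hD
  have hDstep : ∀ p p', dist p p' ≤ 2 * δ → D p' ≤ D p + ENNReal.ofReal (gg μ p (2 * (2 * δ))) := by
    intro p p' hpp
    simp only [hD, ENNReal.iInf_add]
    refine iInf_mono fun x1 => iInf_mono fun hx1 => ?_
    exact (qDelta_snoc 2 hpp x1).trans (add_le_add le_rfl (pair_le hd hpp))
  have hDx : ∀ p, dist p x < η → D p = 0 := by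
    intro p hp
    apply le_antisymm _ zero_le
    exact (iInf₂_le p hp).trans (by rw [qDelta_self])
  have hDy : ∀ p, dist p y < η → ENNReal.ofReal T ≤ D p := by
    intro p hp
    exact le_iInf₂ fun x1 hx1 => hT x1 hx1 p hp
  set w : X → ℝ := fun p => gg μ p (2 * (2 * δ)) with hwdef
  set h : X → ℝ := fun p => 1 / gg μ x (dist x p) + 1 / gg μ y (dist y p) with hh
  set M : ℝ := (2 * CW * Real.sqrt CD) * Real.sqrt CD ^ (3 + ellOf lam) with hM
  have hM0 : 0 ≤ M := by positivity
  have hh0 : ∀ p, 0 ≤ h p := fun p => add_nonneg (div_nonneg zero_le_one (gg_nonneg _ _)) (div_nonneg zero_le_one (gg_nonneg _ _))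
  set F := N.filter (fun p => η / 2 ≤ dist p x ∧ η / 2 ≤ dist p y) with hF
  have hco := coarea F (fun p => M * (w p * h p)) (fun p => (D p).toReal) w
    (fun p _ => mul_nonneg hM0 (mul_nonneg (gg_nonneg _ _) (hh0 p))) (fun p _ => gg_nonneg _ _) (T := T) ?_
  · have hFs : ∀ p ∈ F, ∀ p' ∈ F, p ≠ p' → δ < dist p p' := fun p hp p' hp' =>
      hNsep p (Finset.mem_filter.1 hp).1 p' (Finset.mem_filter.1 hp').1
    have hFρ : ∀ p ∈ F, dist p x + δ / 2 ≤ 2 * R := by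
      intro p hp
      have := hNK p (Finset.mem_filter.1 hp).1
      rw [mem_closedBall] at this
      linarith
    have hsx := sum_upper hd F hδ hFs x x (fun p hp => by linarith [(Finset.mem_filter.1 hp).2.1]) hFρ
    have hsy := sum_upper hd F hδ hFs y x (fun p hp => by linarith [(Finset.mem_filter.1 hp).2.2]) hFρ
    have hg : gg μ x (2 * R) ≤ Real.sqrt CD ^ (3 + ellOf lam) * gg μ x r := by
      refine le_trans (gg_mono hd (ball_subset_ball ?_)) (gg_pow hd x hr _)
      have := lam_le_ell hlam
      rw [pow_add]; nlinarith
    have hww : ∀ p, w p ^ 2 ≤ (CD : ℝ) ^ 3 * μ.real (Metric.ball p (δ / 2)) := by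
      intro p
      simp only [hwdef, gg_sq]
      have := real_pow hd p (r := δ / 2) (by positivity) 3
      rwa [show (2:ℝ) ^ 3 * (δ / 2) = 2 * (2 * δ) by ring] at this
    have hsum : ∑ p ∈ F, M * (w p * h p) * w p ≤ M * (CD : ℝ) ^ 3 * ∑ p ∈ F, μ.real (Metric.ball p (δ / 2)) * h p := by
      rw [Finset.mul_sum]
      refine Finset.sum_le_sum fun p _ => ?_
      calc M * (w p * h p) * w p = M * h p * (w p ^ 2) := by ring
        _ ≤ M * h p * ((CD : ℝ) ^ 3 * μ.real (Metric.ball p (δ / 2))) :=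
            mul_le_mul_of_nonneg_left (hww p) (mul_nonneg hM0 (hh0 p))
        _ = _ := by ring
    have hsplit : ∑ p ∈ F, μ.real (Metric.ball p (δ / 2)) * h p ≤ 4 * Real.sqrt CD * gg μ x (2 * R) := by
      simp only [hh, mul_add, Finset.sum_add_distrib]
      linarith
    have hk2 : Real.sqrt CD ^ 2 = CD := Real.sq_sqrt (by positivity)
    calc T ≤ ∑ p ∈ F, M * (w p * h p) * w p := hco
      _ ≤ M * (CD : ℝ) ^ 3 * ∑ p ∈ F, μ.real (Metric.ball p (δ / 2)) * h p := hsum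
      _ ≤ M * (CD : ℝ) ^ 3 * (4 * Real.sqrt CD * (Real.sqrt CD ^ (3 + ellOf lam) * gg μ x r)) := by
          refine mul_le_mul_of_nonneg_left (hsplit.trans ?_) (by positivity)
          exact mul_le_mul_of_nonneg_left hg (by positivity)
      _ = 8 * CW * (CD : ℝ) ^ 3 * (Real.sqrt CD ^ 2) ^ (4 + ellOf lam) * gg μ x r := by rw [hM]; ring
      _ = _ := by rw [hk2]; ring
  · intro t ht
    obtain ⟨ht0, htT⟩ := ht
    set S := N.filter (fun p => D p < ENNReal.ofReal t ∧ ∃ p' ∈ N, dist p p' ≤ 2 * δ ∧ ENNReal.ofReal t ≤ D p') with hS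
    have htpos : 0 < ENNReal.ofReal t := ENNReal.ofReal_pos.2 ht0
    have htT' : ENNReal.ofReal t ≤ ENNReal.ofReal T := ENNReal.ofReal_le_ofReal htT.le
    have hSy : ∀ p ∈ S, η ≤ dist p y := by
      intro p hp
      by_contra hlt
      exact absurd (Finset.mem_filter.1 hp).2.1 (not_lt.2 (htT'.trans (hDy p (not_le.1 hlt))))
    have hSx : ∀ p ∈ S, η - 2 * δ ≤ dist p x := by
      intro p hp
      obtain ⟨_, _, p', _, hpp, hp't⟩ := Finset.mem_filter.1 hp
      by_contra hlt
      have h1 := dist_triangle_left p' x p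
      have h2 := hDx p' (by linarith)
      rw [h2] at hp't
      exact absurd hp't (not_le.2 htpos)
    have hyR : y ∈ Metric.ball x R := ball_subset_ball (by linarith) hy
    have hsep : TSep (⋃ i ∈ insert none (S.image some), j ⁻¹' (Cset (j x') R δ i)) x' y' := by
      refine level_sep hj (by positivity) (by rw [hx', hy']; exact hyR) N S (by rw [hx']; exact hNcov) D (ENNReal.ofReal t)
        ?_ ?_ ?_ ?_ ?_
      · intro p hp p' hp' hpp h1 h2
        exact Finset.mem_filter.2 ⟨hp, h1, p', hp', hpp, h2⟩
      · intro p hp; rw [hx']; linarith [hSx p hp]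
      · intro p hp; rw [hy']; linarith [hSy p hp]
      · intro p hp hpd; rw [hx'] at hpd; rw [hDx p (by linarith)]; exact htpos
      · intro p hp hpd; rw [hy'] at hpd; exact htT'.trans (hDy p (by linarith))
    obtain ⟨L, hL, hLs, hxL, hyL⟩ := (hLLC x r hr).1 x (mem_ball_self hr) y hy
    obtain ⟨J, hJS, a, haJ, hax, hcase⟩ := min_sep hj (x' := x') (y' := y') (R := R) (δ := δ) (τ := lam * r)
      (by linarith) (by linarith) hδ.le (by rw [hx']; exact hcpt) (by rw [hx']; exact hrange) hL.2.isPreconnected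
      (by rw [hx']; exact hLs) (by rw [hx']; exact hxL) (by rw [hy']; exact hyL) S
      (by rw [hx']; intro p hp; exact hNK p (Finset.mem_filter.1 hp).1) hsep
    rw [hx'] at hax hcase
    rw [hy'] at hcase
    have hlow := level_low hd hlam hLLC hr hη hδ hδη hδr J haJ
      (fun p hp => hNK p (Finset.mem_filter.1 (hJS hp)).1) (fun p hp => by linarith [hSx p (hJS hp)])
      (fun p hp => by linarith [hSy p (hJS hp)])
      (fun a ha b hb hab => hU (2 * δ) (by linarith) a ha b hb hab) hax hcase
    refine hlow.trans ?_
    rw [Finset.mul_sum]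
    apply Finset.sum_le_sum_of_subset_of_nonneg
    · intro p hp
      have hpS := hJS hp
      obtain ⟨hpN, hpt, p', hp'N, hpp, hp't⟩ := Finset.mem_filter.1 hpS
      refine Finset.mem_filter.2 ⟨Finset.mem_filter.2 ⟨hpN, by linarith [hSx p hpS], by linarith [hSy p hpS]⟩, ?_, ?_⟩
      · exact (ENNReal.lt_ofReal_iff_toReal_lt hpt.ne_top).1 hpt
      · have h1 := hp't.trans (hDstep p p' hpp)
        rw [← ENNReal.ofReal_toReal hpt.ne_top, ← ENNReal.ofReal_add ENNReal.toReal_nonneg (gg_nonneg _ _)] at h1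
        exact (ENNReal.ofReal_le_ofReal_iff (add_nonneg ENNReal.toReal_nonneg (gg_nonneg _ _))).1 h1
    · intro p _ _
      exact mul_nonneg hM0 (mul_nonneg (gg_nonneg _ _) (hh0 p))
end coar

section qup
set_option linter.unusedSectionVars false
variable {X : Type*} [MetricSpace X] [MeasurableSpace X] [BorelSpace X] {μ : Measure X} {CD CW : ℝ≥0}

def Cq (lam : ℝ) (CD CW : ℝ≥0) : ℝ := 8 * CW * (CD : ℝ) ^ (7 + ellOf lam)

lemma Cq_nonneg (lam : ℝ) (CD CW : ℝ≥0) : 0 ≤ Cq lam CD CW := by unfold Cq; positivity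

lemma q_upper (hd : IsDoublingWith μ CD) (hw : IsWMDM μ 2 CW) (hiso : ∀ x : X, (𝓝[≠] x).NeBot) (hCW : 0 < CW)
    {lam : ℝ} (hlam : 1 ≤ lam) (hLLC : IsLLC X lam) {j : Pl → X} (hj : IsOpenEmbedding j) {x y : X} {r : ℝ}
    (hr : 0 < r) (hy : y ∈ Metric.ball x r)
    (hcpt : IsCompact (closedBall x (2 * (4 * lam * r)))) (hrange : closedBall x (2 * (4 * lam * r)) ⊆ range j) :
    qmu μ 2 x y ≤ ENNReal.ofReal (Cq lam CD CW * gg μ x r) := by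
  apply qmu_le
  intro δ0 hδ0
  have hC0 : 0 ≤ Cq lam CD CW * gg μ x r := mul_nonneg (Cq_nonneg _ _ _) (gg_nonneg _ _)
  have hall : ∀ ε : ℝ, 0 < ε → qDelta μ 2 δ0 x y ≤ ENNReal.ofReal (Cq lam CD CW * gg μ x r) + ENNReal.ofReal ε := by
    intro ε hε
    obtain ⟨r1, hr1, hg1⟩ := gg_small hd x (hiso x) (ε := ε / 3) (by positivity)
    obtain ⟨r2, hr2, hg2⟩ := gg_small hd y (hiso y) (ε := ε / 3) (by positivity)
    set η := min δ0 (min (r1 / 2) (r2 / 2)) with hη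
    have hη0 : 0 < η := by positivity
    have hηδ : η ≤ δ0 := min_le_left _ _
    have hη1 : 2 * η ≤ r1 := by
      have : η ≤ r1 / 2 := (min_le_right _ _).trans (min_le_left _ _)
      linarith
    have hη2 : 2 * η ≤ r2 := by
      have : η ≤ r2 / 2 := (min_le_right _ _).trans (min_le_right _ _)
      linarith
    obtain ⟨δ₁, hδ₁, hk⟩ := key hd hw hiso hCW hlam hLLC hj hr hη0 hy hcpt hrange
    have hk2 := hk (min δ₁ (δ0 / 2)) (by positivity) (min_le_left _ _) (Cq lam CD CW * gg μ x r + ε / 3)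
    have hne : ¬ (∀ x1 ∈ Metric.ball x η, ∀ y1 ∈ Metric.ball y η,
        ENNReal.ofReal (Cq lam CD CW * gg μ x r + ε / 3) ≤ qDelta μ 2 (2 * (min δ₁ (δ0 / 2))) x1 y1) := by
      intro hcon
      have := hk2 hcon
      unfold Cq at this
      linarith
    push Not at hne
    obtain ⟨x1, hx1, y1, hy1, hlt⟩ := hne
    have hδ' : 2 * (min δ₁ (δ0 / 2)) ≤ δ0 := by
      have : min δ₁ (δ0 / 2) ≤ δ0 / 2 := min_le_right _ _
      linarith
    have hxx : dist x x1 ≤ η := by rw [dist_comm]; exact (mem_ball.1 hx1).le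
    have hyy : dist y y1 ≤ η := by rw [dist_comm]; exact (mem_ball.1 hy1).le
    have e1 : μ (pairBall x x1) ^ (1 / 2 : ℝ) ≤ ENNReal.ofReal (ε / 3) :=
      (pair_le hd hxx).trans (ENNReal.ofReal_le_ofReal ((gg_mono hd (ball_subset_ball hη1)).trans hg1.le))
    have e2 : μ (pairBall y1 y) ^ (1 / 2 : ℝ) ≤ ENNReal.ofReal (ε / 3) := by
      rw [pairBall_comm]
      exact (pair_le hd hyy).trans (ENNReal.ofReal_le_ofReal ((gg_mono hd (ball_subset_ball hη2)).trans hg2.le))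
    calc qDelta μ 2 δ0 x y ≤ μ (pairBall x x1) ^ (1 / 2 : ℝ) + qDelta μ 2 δ0 x1 y := qDelta_cons 2 (hxx.trans hηδ) y
      _ ≤ μ (pairBall x x1) ^ (1 / 2 : ℝ) + (qDelta μ 2 δ0 x1 y1 + μ (pairBall y1 y) ^ (1 / 2 : ℝ)) := by
          gcongr
          exact qDelta_snoc 2 (by rw [dist_comm]; exact hyy.trans hηδ) x1
      _ ≤ ENNReal.ofReal (ε / 3) + (ENNReal.ofReal (Cq lam CD CW * gg μ x r + ε / 3) + ENNReal.ofReal (ε / 3)) := by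
          gcongr
          exact (qDelta_anti 2 hδ' x1 y1).trans hlt.le
      _ = _ := by
          rw [← ENNReal.ofReal_add (by positivity) (by positivity), ← ENNReal.ofReal_add (by positivity) (by positivity),
            ← ENNReal.ofReal_add (by positivity) (by positivity)]
          congr 1; ring
  refine ENNReal.le_of_forall_pos_le_add fun ε hε _ => ?_
  have := hall ε hε
  rwa [ENNReal.ofReal_coe_nnreal] at this

lemma q_lower (hd : IsDoublingWith μ CD) (hw : IsWMDM μ 2 CW) (x y : X) :
    ENNReal.ofReal (gg μ x (dist x y)) ≤ CW * qmu μ 2 x y := (le_pair hd x y).trans (hw x y)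

lemma e_diam {Y : Type*} [MetricSpace Y] (e : X ≃ Y) (hq : ∀ x y : X, edist (e x) (e y) = qmu μ 2 x y)
    {x : X} {r c : ℝ} (hc : 0 ≤ c) (h : ∀ y ∈ Metric.ball x r, qmu μ 2 x y ≤ ENNReal.ofReal c) :
    Metric.ediam (e '' Metric.ball x r) ≤ ENNReal.ofReal (2 * c) := by
  apply Metric.ediam_le
  rintro _ ⟨a, ha, rfl⟩ _ ⟨b, hb, rfl⟩
  have h1 := h a ha
  have h2 := h b hb
  rw [← hq] at h1 h2
  calc edist (e a) (e b) ≤ edist (e x) (e a) + edist (e x) (e b) := edist_triangle_left _ _ _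
    _ ≤ ENNReal.ofReal c + ENNReal.ofReal c := add_le_add h1 h2
    _ = _ := by rw [← ENNReal.ofReal_add hc hc]; congr 1; ring

lemma e_symm_cont {Y : Type*} [MetricSpace Y] (e : X ≃ Y) (hq : ∀ x y : X, edist (e x) (e y) = qmu μ 2 x y)
    (hd : IsDoublingWith μ CD) (hw : IsWMDM μ 2 CW) : Continuous e.symm := by
  rw [continuous_iff_continuousAt]
  intro y
  rw [ContinuousAt, Metric.tendsto_nhds]
  intro ε hε
  set x := e.symm y with hx
  have hg := gg_pos hd x hε
  have hpos : 0 < ENNReal.ofReal (gg μ x ε) / (CW + 1) :=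
    ENNReal.div_pos (ENNReal.ofReal_pos.2 hg).ne' (by simp)
  filter_upwards [EMetric.ball_mem_nhds y hpos] with z hz
  by_contra hn
  push Not at hn
  have h1 := q_lower hd hw x (e.symm z)
  rw [← hq, Equiv.apply_symm_apply, hx, Equiv.apply_symm_apply] at h1
  have h2 : ENNReal.ofReal (gg μ x ε) ≤ ENNReal.ofReal (gg μ x (dist x (e.symm z))) :=
    ENNReal.ofReal_le_ofReal (gg_mono hd (ball_subset_ball (by rw [dist_comm]; exact hn)))
  have h3 : edist z y < ENNReal.ofReal (gg μ x ε) / (CW + 1) := hz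
  rw [ENNReal.lt_div_iff_mul_lt (Or.inl (by simp)) (Or.inl (by simp))] at h3
  have h4 : (CW : ℝ≥0∞) * edist y z ≤ edist z y * (CW + 1) := by
    rw [mul_comm, edist_comm]; gcongr; simp
  exact absurd (h2.trans (h1.trans h4)) (not_le.2 h3)
end qup

section haus
set_option linter.unusedSectionVars false
variable {X : Type*} [MetricSpace X] [MeasurableSpace X] [BorelSpace X] [SecondCountableTopology X]
  {μ : Measure X} {CD CW : ℝ≥0}

lemma haus_le {Y : Type*} [MetricSpace Y] [MeasurableSpace Y] [BorelSpace Y] (e : X ≃ Y)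
    (hq : ∀ x y : X, edist (e x) (e y) = qmu μ 2 x y)
    (hd : IsDoublingWith μ CD) (hiso : ∀ x : X, (𝓝[≠] x).NeBot) {C : ℝ} (hC : 0 ≤ C)
    (hup : ∀ x : X, ∃ R > 0, ∀ r > 0, r ≤ R → ∀ y ∈ Metric.ball x r, qmu μ 2 x y ≤ ENNReal.ofReal (C * gg μ x r))
    {O : Set X} (hO : IsOpen O) :
    μH[2] (e '' O) ≤ ENNReal.ofReal (4 * C ^ 2 * (CD : ℝ) ^ 3) * μ O := by
  classical
  -- choose radii
  have hrad : ∀ n : ℕ, ∀ x : X, ∃ ρ > 0, ρ ≤ 1 ∧ (x ∈ O → closedBall x ρ ⊆ O) ∧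
      Metric.ediam (e '' Metric.ball x (8 * ρ)) ≤ ENNReal.ofReal (2 * (C * gg μ x (8 * ρ))) ∧
      2 * (C * gg μ x (8 * ρ)) ≤ 1 / ((n : ℝ) + 1) := by
    intro n x
    obtain ⟨R, hR, hRx⟩ := hup x
    obtain ⟨r1, hr1, hg1⟩ := gg_small hd x (hiso x) (ε := 1 / ((n : ℝ) + 1) / (2 * (C + 1))) (by positivity)
    obtain ⟨r2, hr2, h2⟩ : ∃ r2 > 0, x ∈ O → closedBall x r2 ⊆ O := by
      by_cases hx : x ∈ O
      · obtain ⟨r2, hr2, h⟩ := Metric.nhds_basis_closedBall.mem_iff.1 (hO.mem_nhds hx)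
        exact ⟨r2, hr2, fun _ => h⟩
      · exact ⟨1, one_pos, fun h => absurd h hx⟩
    set ρ := min 1 (min (R / 8) (min (r1 / 8) r2)) with hρ
    have hρ0 : 0 < ρ := by positivity
    have a1 : ρ ≤ 1 := min_le_left _ _
    have a2 : ρ ≤ R / 8 := (min_le_right _ _).trans (min_le_left _ _)
    have a3 : ρ ≤ r1 / 8 := (min_le_right _ _).trans ((min_le_right _ _).trans (min_le_left _ _))
    have a4 : ρ ≤ r2 := (min_le_right _ _).trans ((min_le_right _ _).trans (min_le_right _ _))
    refine ⟨ρ, hρ0, a1, fun hx => (closedBall_subset_closedBall a4).trans (h2 hx), ?_, ?_⟩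
    · exact e_diam e hq (mul_nonneg hC (gg_nonneg _ _)) (hRx (8 * ρ) (by positivity) (by linarith))
    · have h3 : gg μ x (8 * ρ) ≤ 1 / ((n : ℝ) + 1) / (2 * (C + 1)) :=
        (gg_mono hd (ball_subset_ball (by linarith))).trans hg1.le
      rw [le_div_iff₀ (by positivity)] at h3
      have := gg_nonneg (μ := μ) x (8 * ρ)
      nlinarith
  choose ρ hρ0 hρ1 hρO hρd hρs using hrad
  have hvit := fun n : ℕ => Vitali.exists_disjoint_subfamily_covering_enlargement_closedBall O id (ρ n) 1
    (fun a _ => hρ1 n a) 5 (by norm_num)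
  choose u huO hudis hucov using hvit
  have hcount : ∀ n, (u n).Countable := by
    intro n
    refine Set.PairwiseDisjoint.countable_of_isOpen (s := fun a => Metric.ball a (ρ n a)) (a := u n) ?_ ?_ ?_
    · intro a ha b hb hab
      exact (hudis n ha hb hab).mono ball_subset_closedBall ball_subset_closedBall
    · exact fun _ _ => isOpen_ball
    · exact fun a _ => ⟨a, mem_ball_self (hρ0 n a)⟩
  have hct : ∀ n, Countable (u n) := fun n => (hcount n).to_subtype
  have hmain := Measure.hausdorffMeasure_le_liminf_tsum (X := Y) (ι := fun n => u n) 2 (e '' O) (l := atTop)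
    (fun n : ℕ => ENNReal.ofReal (1 / ((n : ℝ) + 1)))
    (by
      have := ENNReal.tendsto_ofReal tendsto_one_div_add_atTop_nhds_zero_nat
      rwa [ENNReal.ofReal_zero] at this)
    (fun n i => e '' Metric.ball (i : X) (8 * ρ n i))
    (Eventually.of_forall fun n i => (hρd n i).trans (ENNReal.ofReal_le_ofReal (hρs n i)))
    (Eventually.of_forall fun n => by
      rintro _ ⟨x, hx, rfl⟩
      obtain ⟨b, hb, hsub⟩ := hucov n x hx
      refine mem_iUnion.2 ⟨⟨b, hb⟩, mem_image_of_mem _ ?_⟩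
      have h1 := hsub (mem_closedBall_self (hρ0 n x).le)
      have h2 : dist x b ≤ 5 * ρ n b := h1
      have := hρ0 n b
      rw [mem_ball]; linarith)
  refine hmain.trans ?_
  have hb : ∀ n : ℕ, ∑' i : u n, Metric.ediam (e '' Metric.ball (i : X) (8 * ρ n i)) ^ (2 : ℝ) ≤
      ENNReal.ofReal (4 * C ^ 2 * (CD : ℝ) ^ 3) * μ O := by
    intro n
    have hterm : ∀ i : u n, Metric.ediam (e '' Metric.ball (i : X) (8 * ρ n i)) ^ (2 : ℝ) ≤
        ENNReal.ofReal (4 * C ^ 2 * (CD : ℝ) ^ 3) * μ (Metric.ball (i : X) (ρ n i)) := by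
      intro i
      calc Metric.ediam (e '' Metric.ball (i : X) (8 * ρ n i)) ^ (2 : ℝ)
          ≤ ENNReal.ofReal (2 * (C * gg μ (i : X) (8 * ρ n i))) ^ (2 : ℝ) :=
            ENNReal.rpow_le_rpow (hρd n i) (by norm_num)
        _ = ENNReal.ofReal (4 * C ^ 2 * μ.real (Metric.ball (i : X) (8 * ρ n i))) := by
            rw [show (2 : ℝ) = ((2 : ℕ) : ℝ) by norm_num, ENNReal.rpow_natCast,
              ← ENNReal.ofReal_pow (by have := gg_nonneg (μ := μ) (i : X) (8 * ρ n i); positivity), ← gg_sq]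
            congr 1; push_cast; ring
        _ ≤ ENNReal.ofReal (4 * C ^ 2 * (CD : ℝ) ^ 3 * μ.real (Metric.ball (i : X) (ρ n i))) := by
            apply ENNReal.ofReal_le_ofReal
            have := real_pow hd (i : X) (hρ0 n i) 3
            rw [show (2 : ℝ) ^ 3 = 8 by norm_num] at this
            calc 4 * C ^ 2 * μ.real (Metric.ball (i : X) (8 * ρ n i))
                ≤ 4 * C ^ 2 * ((CD : ℝ) ^ 3 * μ.real (Metric.ball (i : X) (ρ n i))) := by gcongr
              _ = _ := by ring
        _ = _ := by
            rw [ENNReal.ofReal_mul (by positivity), ofReal_measureReal (hd.fin _ _)]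
    calc _ ≤ ∑' i : u n, ENNReal.ofReal (4 * C ^ 2 * (CD : ℝ) ^ 3) * μ (Metric.ball (i : X) (ρ n i)) :=
          ENNReal.tsum_le_tsum hterm
      _ = ENNReal.ofReal (4 * C ^ 2 * (CD : ℝ) ^ 3) * ∑' i : u n, μ (Metric.ball (i : X) (ρ n i)) := ENNReal.tsum_mul_left
      _ ≤ _ := by
          gcongr
          rw [← measure_iUnion (μ := μ) (f := fun i : u n => Metric.ball (i : X) (ρ n i))]
          · apply measure_mono
            refine iUnion_subset fun i => ball_subset_closedBall.trans (hρO n i (huO n i.2))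
          · intro a b hab
            exact (hudis n a.2 b.2 (fun h => hab (Subtype.ext h))).mono ball_subset_closedBall ball_subset_closedBall
          · exact fun _ => measurableSet_ball
  refine liminf_le_of_le (by isBoundedDefault) fun b hbb => ?_
  obtain ⟨n, hn⟩ := hbb.exists
  exact hn.trans (hb n)
end haus

section modul
set_option linter.unusedSectionVars false

lemma crossing {f : ℝ → ℝ} (hf : ContinuousOn f (Icc 0 1)) {α β : ℝ} (h0 : f 0 < α) (hαβ : α < β) (h1 : β < f 1) :
    ∃ s t : ℝ, 0 < s ∧ s ≤ t ∧ t < 1 ∧ f s = α ∧ f t = β ∧ (∀ u ∈ Icc s t, α ≤ f u ∧ f u ≤ β) ∧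
      ∀ u ∈ Icc (0 : ℝ) 1, β ≤ f u → t ≤ u := by
  have hE : IsCompact (Icc (0 : ℝ) 1 ∩ f ⁻¹' Ici β) :=
    isCompact_Icc.of_isClosed_subset (hf.preimage_isClosed_of_isClosed isClosed_Icc isClosed_Ici) inter_subset_left
  obtain ⟨t, ⟨ht01, htβ⟩, htmin⟩ := hE.exists_isLeast ⟨1, ⟨by simp, h1.le⟩⟩
  have hmin : ∀ u ∈ Icc (0 : ℝ) 1, β ≤ f u → t ≤ u := fun u hu hb => htmin ⟨hu, hb⟩
  have hft : f t = β := by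
    obtain ⟨u, hu, hfu⟩ := intermediate_value_Icc ht01.1 (hf.mono (Icc_subset_Icc_right ht01.2))
      (show β ∈ Icc (f 0) (f t) from ⟨by linarith, htβ⟩)
    have : t ≤ u := hmin u ⟨hu.1, hu.2.trans ht01.2⟩ hfu.ge
    rw [← hfu, le_antisymm hu.2 this]
  have hft' : ContinuousOn f (Icc 0 t) := hf.mono (Icc_subset_Icc_right ht01.2)
  have hF : IsCompact (Icc (0 : ℝ) t ∩ f ⁻¹' Iic α) :=
    isCompact_Icc.of_isClosed_subset (hft'.preimage_isClosed_of_isClosed isClosed_Icc isClosed_Iic) inter_subset_left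
  obtain ⟨s, ⟨hs0t, hsα⟩, hsmax⟩ := hF.exists_isGreatest ⟨0, ⟨⟨le_rfl, ht01.1⟩, h0.le⟩⟩
  have hfs : f s = α := by
    obtain ⟨u, hu, hfu⟩ := intermediate_value_Icc hs0t.2 (hft'.mono (Icc_subset_Icc_left hs0t.1))
      (show α ∈ Icc (f s) (f t) from ⟨hsα, by linarith⟩)
    have : u ≤ s := hsmax ⟨⟨hs0t.1.trans hu.1, hu.2⟩, hfu.le⟩
    rw [← hfu, le_antisymm hu.1 this]
  refine ⟨s, t, ?_, hs0t.2, ?_, hfs, hft, ?_, hmin⟩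
  · rcases hs0t.1.eq_or_lt with h | h
    · rw [← h] at hfs; linarith
    · exact h
  · rcases ht01.2.eq_or_lt with h | h
    · rw [h] at hft; linarith
    · exact h
  · intro u hu
    constructor
    · by_contra hc
      have : u ≤ s := hsmax ⟨⟨hs0t.1.trans hu.1, hu.2⟩, (not_le.1 hc).le⟩
      have : u = s := le_antisymm this hu.1
      rw [this] at hc; linarith
    · by_contra hc
      have : t ≤ u := hmin u ⟨hs0t.1.trans hu.1, hu.2.trans ht01.2⟩ (not_le.1 hc).le
      have : u = t := le_antisymm hu.2 this
      rw [this] at hc; linarith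

variable {X : Type*} [MetricSpace X] [MeasurableSpace X] [BorelSpace X] [SecondCountableTopology X]
  {μ : Measure X} {CD CW : ℝ≥0}

lemma line_ge {Y : Type*} [MetricSpace Y] (ρ : Y → ℝ≥0∞) (γ : ℝ → Y) {k : ℕ} (hk : 0 < k) (s t : ℕ → ℝ)
    (h0 : ∀ j < k, 0 < s j) (h1 : ∀ j < k, t j < 1) (hst : ∀ j < k, s j ≤ t j) (hts : ∀ j, j + 1 < k → t j ≤ s (j + 1))
    (hI : ∀ j < k, ENNReal.ofReal (1 / (k : ℝ)) ≤ (⨅ u ∈ Icc (s j) (t j), ρ (γ u)) * edist (γ (s j)) (γ (t j))) :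
    1 ≤ openLineIntegral ρ γ := by
  obtain ⟨K, rfl⟩ : ∃ K, k = K + 1 := ⟨k - 1, by omega⟩
  set T : ℕ → ℝ := fun m => if m % 2 = 0 then s (m / 2) else t (m / 2) with hT
  have hTe : ∀ i, T (2 * i) = s i := by intro i; simp [hT]
  have hTo : ∀ i, T (2 * i + 1) = t i := by
    intro i
    have h1 : (2 * i + 1) % 2 = 1 := by omega
    have h2 : (2 * i + 1) / 2 = i := by omega
    simp [hT, h1, h2]
  have hmono : ∀ m < 2 * K + 1, T m ≤ T (m + 1) := by
    intro m hm
    rcases Nat.even_or_odd' m with ⟨i, rfl | rfl⟩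
    · rw [hTe, hTo]; exact hst i (by omega)
    · rw [hTo, show 2 * i + 1 + 1 = 2 * (i + 1) by ring, hTe]; exact hts i (by omega)
  have hmono2 : ∀ m ≤ 2 * K + 1, T 0 ≤ T m := by
    intro m
    induction m with
    | zero => intro _; exact le_rfl
    | succ m ih => intro hm; exact (ih (by omega)).trans (hmono m (by omega))
  have hsum : (1 : ℝ≥0∞) ≤ ∑ m ∈ Finset.range (2 * K + 1),
      (⨅ u ∈ Icc (T m) (T (m + 1)), ρ (γ u)) * edist (γ (T m)) (γ (T (m + 1))) := by
    calc (1 : ℝ≥0∞) = ∑ i ∈ Finset.range (K + 1), ENNReal.ofReal (1 / ((K + 1 : ℕ) : ℝ)) := by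
          rw [← ENNReal.ofReal_sum_of_nonneg (fun _ _ => by positivity), Finset.sum_const, Finset.card_range, nsmul_eq_mul,
            mul_one_div_cancel (by positivity), ENNReal.ofReal_one]
      _ ≤ ∑ i ∈ Finset.range (K + 1), (⨅ u ∈ Icc (T (2 * i)) (T (2 * i + 1)), ρ (γ u)) *
            edist (γ (T (2 * i))) (γ (T (2 * i + 1))) := by
          refine Finset.sum_le_sum fun i hi => ?_
          rw [hTe, hTo]
          exact hI i (Finset.mem_range.1 hi)
      _ = ∑ m ∈ (Finset.range (K + 1)).image (fun i => 2 * i), (⨅ u ∈ Icc (T m) (T (m + 1)), ρ (γ u)) *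
            edist (γ (T m)) (γ (T (m + 1))) := by
          rw [Finset.sum_image]
          intro a _ b _ hab
          simp only at hab
          omega
      _ ≤ _ := by
          apply Finset.sum_le_sum_of_subset
          intro m hm
          obtain ⟨i, hi, rfl⟩ := Finset.mem_image.1 hm
          rw [Finset.mem_range] at *
          omega
  refine hsum.trans ?_
  unfold openLineIntegral
  refine le_iSup_of_le (T 0) (le_iSup_of_le (T (2 * K + 1)) (le_iSup_of_le ?_ (le_iSup_of_le ?_ (le_iSup_of_le ?_ ?_))))
  · rw [show (0:ℕ) = 2 * 0 by rfl, hTe]; exact h0 0 (by omega)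
  · exact hmono2 _ le_rfl
  · rw [hTo]; exact h1 K (by omega)
  · unfold lowerLineIntegral
    exact le_iSup_of_le (2 * K + 1) (le_iSup_of_le T (le_iSup_of_le rfl (le_iSup_of_le rfl (le_iSup_of_le hmono le_rfl))))

lemma mod_gen {Y : Type*} [MetricSpace Y] [MeasurableSpace Y] [BorelSpace Y] (e : X ≃ Y)
    (hq : ∀ x y : X, edist (e x) (e y) = qmu μ 2 x y)
    (hd : IsDoublingWith μ CD) (hw : IsWMDM μ 2 CW) {C : ℝ} (hC : 0 ≤ C)
    (hH : ∀ O : Set X, IsOpen O → μH[2] (e '' O) ≤ ENNReal.ofReal (4 * C ^ 2 * (CD : ℝ) ^ 3) * μ O)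
    (x₀ : X) {a b : ℝ} (ha : 0 < a) {k : ℕ} (hk : 0 < k) (hb : 2 ^ k * a ≤ b) :
    ∃ ρ : Y → ℝ≥0∞, Measurable ρ ∧ IsAdmissible {γ : ℝ → Y | ContinuousOn γ (Set.Icc 0 1) ∧
        γ 0 ∈ (fun p => e p) '' Metric.closedBall x₀ a ∧
        γ 1 ∈ (fun p => e p) '' (Metric.ball x₀ b)ᶜ} ρ ∧
      ∫⁻ y, ρ y ^ 2 ∂(ENNReal.ofReal (Real.pi / 4) • (μH[2] : Measure Y)) ≤
        ENNReal.ofReal (Real.pi * CW ^ 2 * (CD : ℝ) ^ 6 * C ^ 2 / k) := by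
  have hsc := e_symm_cont e hq hd hw
  set R : ℕ → ℝ := fun j => 2 ^ j * a with hR
  have hR0 : ∀ j, 0 < R j := fun j => by positivity
  set kap := Real.sqrt CD with hkap
  set c : ℕ → ℝ := fun j => CW * kap ^ 3 / (k * gg μ x₀ (2 * R j)) with hc
  have hg : ∀ j, 0 < gg μ x₀ (2 * R j) := fun j => gg_pos hd x₀ (by have := hR0 j; positivity)
  have hkR : (0 : ℝ) < k := by exact_mod_cast hk
  have hc0 : ∀ j, 0 ≤ c j := fun j => by have := hg j; positivity
  set An : ℕ → Set Y := fun j => e.symm ⁻¹' {z | 5 / 4 * R j ≤ dist z x₀ ∧ dist z x₀ ≤ 7 / 4 * R j} with hAn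
  have hAm : ∀ j, MeasurableSet (An j) := by
    intro j
    apply IsClosed.measurableSet
    apply IsClosed.preimage hsc
    exact (isClosed_le continuous_const (continuous_id.dist continuous_const)).inter
      (isClosed_le (continuous_id.dist continuous_const) continuous_const)
  set ρ : Y → ℝ≥0∞ := fun y => ⨆ j : Fin k, (An j).indicator (fun _ => ENNReal.ofReal (c j)) y with hρ
  refine ⟨ρ, Measurable.iSup fun j => measurable_const.indicator (hAm j), ?_, ?_⟩
  · rintro γ ⟨hγ, ⟨p0, hp0, hγ0⟩, ⟨p1, hp1, hγ1⟩⟩ _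
    set f : ℝ → ℝ := fun u => dist (e.symm (γ u)) x₀ with hf
    have hfc : ContinuousOn f (Icc 0 1) :=
      (hsc.dist continuous_const).comp_continuousOn hγ
    have hf0 : f 0 ≤ a := by
      simp only [hf, ← hγ0, Equiv.symm_apply_apply]; exact hp0
    have hf1 : b ≤ f 1 := by
      simp only [hf, ← hγ1, Equiv.symm_apply_apply]; simpa using hp1
    have hex : ∀ j : ℕ, ∃ s t : ℝ, j < k → 0 < s ∧ s ≤ t ∧ t < 1 ∧ f s = 5 / 4 * R j ∧ f t = 7 / 4 * R j ∧
        (∀ u ∈ Icc s t, 5 / 4 * R j ≤ f u ∧ f u ≤ 7 / 4 * R j) ∧ ∀ u ∈ Icc (0 : ℝ) 1, 7 / 4 * R j ≤ f u → t ≤ u := by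
      intro j
      by_cases hj : j < k
      · have e1 : a ≤ R j := by
          have : (1:ℝ) ≤ 2 ^ j := one_le_pow₀ (by norm_num)
          simp only [hR]; nlinarith
        have e2 : 2 * R j ≤ b := by
          refine le_trans ?_ hb
          have : (2:ℝ) ^ (j + 1) ≤ 2 ^ k := pow_le_pow_right₀ (by norm_num) hj
          simp only [hR]
          rw [pow_succ] at this
          nlinarith
        have := hR0 j
        obtain ⟨s, t, h⟩ := crossing hfc (α := 5 / 4 * R j) (β := 7 / 4 * R j) (by linarith) (by linarith) (by linarith)
        exact ⟨s, t, fun _ => h⟩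
      · exact ⟨0, 0, fun h => absurd h hj⟩
    choose s t hst using hex
    refine line_ge ρ γ hk s t (fun j hj => (hst j hj).1) (fun j hj => (hst j hj).2.2.1) (fun j hj => (hst j hj).2.1) ?_ ?_
    · intro j hj
      obtain ⟨-, -, -, -, -, -, hmin⟩ := hst j (by omega)
      obtain ⟨q1, q2, q3, q4, -⟩ := hst (j + 1) hj
      apply hmin _ ⟨q1.le, by linarith⟩
      rw [q4]
      have := hR0 j
      have : R (j + 1) = 2 * R j := by simp only [hR]; ring
      linarith
    · intro j hj
      obtain ⟨q1, q2, q3, q4, q5, q6, -⟩ := hst j hj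
      have hlow : ENNReal.ofReal (c j) ≤ ⨅ u ∈ Icc (s j) (t j), ρ (γ u) := by
        refine le_iInf₂ fun u hu => ?_
        refine le_iSup_of_le (⟨j, hj⟩ : Fin k) ?_
        rw [Set.indicator_of_mem]
        exact q6 u hu
      have hRj := hR0 j
      set p := e.symm (γ (s j)) with hp
      set p' := e.symm (γ (t j)) with hp'
      have hdist : 1 / 2 * R j ≤ dist p p' := by
        have h1 := dist_triangle_left p' x₀ p
        have h2 : dist p x₀ = 5 / 4 * R j := q4
        have h3 : dist p' x₀ = 7 / 4 * R j := q5
        linarith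
      have hql := q_lower hd hw p p'
      rw [← hq, hp, hp', Equiv.apply_symm_apply, Equiv.apply_symm_apply, edist_dist, ← ENNReal.ofReal_coe_nnreal,
        ← ENNReal.ofReal_mul (by positivity), ENNReal.ofReal_le_ofReal_iff (by positivity), ← hp, ← hp'] at hql
      have hgg : gg μ x₀ (2 * R j) ≤ kap ^ 3 * (CW * dist (γ (s j)) (γ (t j))) := by
        calc gg μ x₀ (2 * R j) ≤ gg μ p (2 ^ 3 * (1 / 2 * R j)) := by
              apply gg_mono hd
              apply ball_subset_ball'
              have h2 : dist p x₀ = 5 / 4 * R j := q4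
              rw [dist_comm, h2]; linarith
          _ ≤ kap ^ 3 * gg μ p (1 / 2 * R j) := gg_pow hd p (by positivity) 3
          _ ≤ kap ^ 3 * gg μ p (dist p p') := by
              gcongr; exact gg_mono hd (ball_subset_ball hdist)
          _ ≤ _ := by gcongr
      calc ENNReal.ofReal (1 / (k : ℝ)) ≤ ENNReal.ofReal (c j * dist (γ (s j)) (γ (t j))) := by
            apply ENNReal.ofReal_le_ofReal
            have hgj := hg j
            simp only [hc]
            rw [div_mul_eq_mul_div, div_le_div_iff₀ hkR (by positivity)]
            nlinarith
        _ = ENNReal.ofReal (c j) * edist (γ (s j)) (γ (t j)) := by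
            rw [ENNReal.ofReal_mul (hc0 j), edist_dist]
        _ ≤ _ := by gcongr
  · have : Nonempty (Fin k) := ⟨⟨0, hk⟩⟩
    have hpt : ∀ y, ρ y ^ 2 ≤ ∑ j : Fin k, (An j).indicator (fun _ => ENNReal.ofReal (c j) ^ 2) y := by
      intro y
      obtain ⟨i, hi⟩ := exists_eq_ciSup_of_finite (f := fun j : Fin k => (An j).indicator (fun _ => ENNReal.ofReal (c j)) y)
      have h1 : ρ y = (An i).indicator (fun _ => ENNReal.ofReal (c i)) y := hi.symm
      rw [h1]
      refine le_trans (le_of_eq ?_) (Finset.single_le_sum (f := fun j : Fin k => (An j).indicator (fun _ => ENNReal.ofReal (c j) ^ 2) y)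
        (fun _ _ => zero_le) (Finset.mem_univ i))
      by_cases hy : y ∈ An i <;> simp [hy]
    calc ∫⁻ y, ρ y ^ 2 ∂(ENNReal.ofReal (Real.pi / 4) • (μH[2] : Measure Y))
        ≤ ∫⁻ y, ∑ j : Fin k, (An j).indicator (fun _ => ENNReal.ofReal (c j) ^ 2) y ∂(ENNReal.ofReal (Real.pi / 4) • (μH[2] : Measure Y)) :=
          lintegral_mono hpt
      _ = ∑ j : Fin k, ENNReal.ofReal (c j) ^ 2 * (ENNReal.ofReal (Real.pi / 4) * μH[2] (An j)) := by
          rw [lintegral_finsetSum _ (fun (j : Fin k) _ => measurable_const.indicator (hAm j))]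
          refine Finset.sum_congr rfl fun j _ => ?_
          rw [lintegral_indicator_const (hAm j)]
          simp
      _ ≤ ∑ j : Fin k, ENNReal.ofReal (Real.pi * CW ^ 2 * (CD : ℝ) ^ 6 * C ^ 2 / k ^ 2) := by
          refine Finset.sum_le_sum fun j _ => ?_
          have hsub : An j ⊆ e '' Metric.ball x₀ (2 * R j) := by
            intro y hy
            refine ⟨e.symm y, ?_, by simp⟩
            have := hy.2
            have := hR0 j
            rw [mem_ball]; linarith
          have hm := (measure_mono hsub).trans (hH _ isOpen_ball)
          rw [← ofReal_measureReal (hd.fin x₀ (2 * R j)), ← gg_sq, ← ENNReal.ofReal_mul (by positivity)] at hm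
          calc ENNReal.ofReal (c j) ^ 2 * (ENNReal.ofReal (Real.pi / 4) * μH[2] (An j))
              ≤ ENNReal.ofReal (c j) ^ 2 * (ENNReal.ofReal (Real.pi / 4) *
                ENNReal.ofReal (4 * C ^ 2 * (CD : ℝ) ^ 3 * gg μ x₀ (2 * R j) ^ 2)) := by gcongr
            _ = ENNReal.ofReal (Real.pi * CW ^ 2 * (CD : ℝ) ^ 6 * C ^ 2 / k ^ 2) := by
                have hk2 : kap ^ 2 = CD := Real.sq_sqrt (by positivity)
                have hgj := hg j
                rw [← ENNReal.ofReal_mul (by positivity), ← ENNReal.ofReal_pow (hc0 j), ← ENNReal.ofReal_mul (by positivity)]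
                congr 1
                simp only [hc]
                rw [← hk2]
                field_simp
      _ = _ := by
          rw [Finset.sum_const, Finset.card_univ, Fintype.card_fin, nsmul_eq_mul, ← ENNReal.ofReal_natCast,
            ← ENNReal.ofReal_mul (by positivity)]
          congr 1
          field_simp
end modul

theorem statement17
    {X : Type*} [MetricSpace X] [MeasurableSpace X] [BorelSpace X]
    (lam : ℝ) (CD CW : ℝ≥0) (M : ℕ) (μ : Measure X)
    (hlam : 1 ≤ lam) (hLLC : IsLLC X lam)
    (hhom : ∃ Ω₀ : Set ↥Sphere2, IsCircleDomainS2 Ω₀ ∧ Nonempty (X ≃ₜ ↥Ω₀))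
    (hcpt : CompactSpace (Completion X))
    (hfin : (residComps X).Finite) (hM : (residComps X).ncard = M)
    (hreg : μ.Regular) (hdbl : IsDoublingWith μ CD) (hw : IsWMDM μ 2 CW)
    {Y : Type*} [MetricSpace Y] (e : X ≃ Y)
    (hq : ∀ x y : X, edist (e x) (e y) = qmu μ 2 x y)
    (x₀ : X) (A B : ℝ) (hA : 0 < A) (hB : 4 * lam ^ 2 * A ≤ B)
    (k : ℕ) (hk2 : 2 ≤ k)
    (hk : 2 ^ k * lam ^ 2 * A ≤ B) (hk' : B < 2 ^ (k + 1) * lam ^ 2 * A) :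
    modulusH2 {γ : ℝ → Y | ContinuousOn γ (Set.Icc 0 1) ∧
        γ 0 ∈ (fun p => e p) '' Metric.closedBall x₀ (lam * A) ∧
        γ 1 ∈ (fun p => e p) '' (Metric.ball x₀ (B / lam))ᶜ} ≤
      ENNReal.ofReal (2 * Real.pi) * (CW : ℝ≥0∞) ^ 2 * CSconst lam CD CW ^ 2 *
        (CD : ℝ≥0∞) ^ 6 / (k : ℝ≥0∞) := by
  have hiso : ∀ x : X, (𝓝[≠] x).NeBot := fun x => by
    obtain ⟨j, hj, hx⟩ := exists_chart hhom x
    exact chart_iso hj hx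
  have hCW : 0 < CW := CW_pos hdbl hw (hiso x₀)
  have hsec : SecondCountableTopology X := by
    obtain ⟨Ω, _, ⟨h⟩⟩ := hhom
    exact h.isEmbedding.secondCountableTopology
  have hup : ∀ x : X, ∃ R > 0, ∀ r > 0, r ≤ R → ∀ y ∈ Metric.ball x r,
      qmu μ 2 x y ≤ ENNReal.ofReal (Cq lam CD CW * gg μ x r) := by
    intro x
    obtain ⟨j, hj, hx⟩ := exists_chart hhom x
    obtain ⟨R, hR, hRc, hRj⟩ := chart_ball hj hx
    refine ⟨R / (8 * lam), by positivity, fun r hr hrR y hy => ?_⟩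
    have hle : 2 * (4 * lam * r) ≤ R := by
      rw [le_div_iff₀ (by positivity)] at hrR; linarith
    exact q_upper hdbl hw hiso hCW hlam hLLC hj hr hy
      (hRc.of_isClosed_subset isClosed_closedBall (closedBall_subset_closedBall hle))
      ((closedBall_subset_closedBall hle).trans hRj)
  letI : MeasurableSpace Y := borel Y
  have hbor : BorelSpace Y := ⟨rfl⟩
  have hb : 2 ^ k * (lam * A) ≤ B / lam := by
    rw [le_div_iff₀ (by positivity)]; nlinarith
  obtain ⟨ρ, hρm, hρa, hρi⟩ := mod_gen e hq hdbl hw (Cq_nonneg lam CD CW)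
    (fun O hO => haus_le e hq hdbl hiso (Cq_nonneg lam CD CW) hup hO) x₀ (a := lam * A) (b := B / lam)
    (by positivity) (k := k) (by omega) hb
  have hCD := one_le_CD hdbl x₀
  have hkpos : (0 : ℝ) < k := by exact_mod_cast (by omega : 0 < k)
  have hmod : modulusH2 {γ : ℝ → Y | ContinuousOn γ (Set.Icc 0 1) ∧
        γ 0 ∈ (fun p => e p) '' Metric.closedBall x₀ (lam * A) ∧
        γ 1 ∈ (fun p => e p) '' (Metric.ball x₀ (B / lam))ᶜ} ≤
      ENNReal.ofReal (Real.pi * CW ^ 2 * (CD : ℝ) ^ 6 * Cq lam CD CW ^ 2 / k) := by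
    unfold modulusH2
    exact iInf_le_of_le ρ (iInf_le_of_le hρm (iInf_le_of_le hρa hρi))
  refine hmod.trans ?_
  have htgt : ENNReal.ofReal (2 * Real.pi) * (CW : ℝ≥0∞) ^ 2 * CSconst lam CD CW ^ 2 *
        (CD : ℝ≥0∞) ^ 6 / (k : ℝ≥0∞) =
      ENNReal.ofReal (2 * Real.pi * CW ^ 2 * (16 * CW * (CD : ℝ) ^ (28 + 16 * ellOf lam)) ^ 2 * (CD : ℝ) ^ 6 / k) := by
    unfold CSconst
    have hP : (0 : ℝ) ≤ 2 * Real.pi := by positivity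
    generalize 2 * Real.pi = P at hP ⊢
    rw [ENNReal.ofReal_div_of_pos hkpos, ENNReal.ofReal_mul (by positivity), ENNReal.ofReal_mul (by positivity),
      ENNReal.ofReal_mul hP, ENNReal.ofReal_pow (by positivity), ENNReal.ofReal_pow (by positivity),
      ENNReal.ofReal_pow (by positivity), ENNReal.ofReal_mul (by positivity), ENNReal.ofReal_mul (by positivity),
      ENNReal.ofReal_pow (by positivity), ENNReal.ofReal_coe_nnreal, ENNReal.ofReal_coe_nnreal, ENNReal.ofReal_natCast,
      ENNReal.ofReal_ofNat]
  rw [htgt]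
  apply ENNReal.ofReal_le_ofReal
  apply div_le_div_of_nonneg_right _ hkpos.le
  have hpow : (CD : ℝ) ^ (14 + 2 * ellOf lam) ≤ (CD : ℝ) ^ (56 + 32 * ellOf lam) := pow_le_pow_right₀ hCD (by omega)
  have hpi := Real.pi_pos
  calc Real.pi * CW ^ 2 * (CD : ℝ) ^ 6 * Cq lam CD CW ^ 2
      = 64 * Real.pi * CW ^ 4 * (CD : ℝ) ^ 6 * (CD : ℝ) ^ (14 + 2 * ellOf lam) := by unfold Cq; ring
    _ ≤ 512 * Real.pi * CW ^ 4 * (CD : ℝ) ^ 6 * (CD : ℝ) ^ (56 + 32 * ellOf lam) := by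
        gcongr; norm_num
    _ = _ := by ring

end
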